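/- Every proof in LK with only propositional (quantifier-free) cuts of a sequent S can be transformed into a cut-free LK-proof of S whose size is at most double exponential in the size of the original proof. -/

import Mathlib

namespace EpsCalc

/-! ## Syntax: terms and formulas of first-order logic extended by epsilon terms.
We use a locally nameless representation: `bvar` are de Bruijn indices for bound
variables (bound by `all`, `ex`, or `eps`), `fvar` are named free variables. -/

mutual
inductive Tm : Type where
  | bvar : ℕ → Tm
  | fvar : ℕ → Tm
  | func : ℕ → Tms → Tm
  | eps  : Fm → Tm          -- the epsilon term ε_x A(x)

inductive Tms : Type where
  | nil  : Tms
  | cons : Tm → Tms → Tms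

inductive Fm : Type where
  | atom : ℕ → Tms → Fm
  | and  : Fm → Fm → Fm
  | or   : Fm → Fm → Fm
  | imp  : Fm → Fm → Fm
  | not  : Fm → Fm
  | all  : Fm → Fm          -- ∀ binding de Bruijn index 0
  | ex   : Fm → Fm          -- ∃ binding de Bruijn index 0
end

/-! lifting of bound variables (shift indices ≥ k by one) -/
mutual
def liftT (k : ℕ) : Tm → Tm
  | .bvar n => if n < k then .bvar n else .bvar (n+1)
  | .fvar a => .fvar a
  | .func f ts => .func f (liftTs k ts)
  | .eps A => .eps (liftF (k+1) A)
def liftTs (k : ℕ) : Tms → Tms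
  | .nil => .nil
  | .cons t ts => .cons (liftT k t) (liftTs k ts)
def liftF (k : ℕ) : Fm → Fm
  | .atom p ts => .atom p (liftTs k ts)
  | .and A B => .and (liftF k A) (liftF k B)
  | .or A B => .or (liftF k A) (liftF k B)
  | .imp A B => .imp (liftF k A) (liftF k B)
  | .not A => .not (liftF k A)
  | .all A => .all (liftF (k+1) A)
  | .ex A => .ex (liftF (k+1) A)
end

/-! substitution of a term for the bound variable k -/
mutual
def subT (k : ℕ) (u : Tm) : Tm → Tm
  | .bvar n => if n = k then u else if n < k then .bvar n else .bvar (n-1)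
  | .fvar a => .fvar a
  | .func f ts => .func f (subTs k u ts)
  | .eps A => .eps (subF (k+1) (liftT 0 u) A)
def subTs (k : ℕ) (u : Tm) : Tms → Tms
  | .nil => .nil
  | .cons t ts => .cons (subT k u t) (subTs k u ts)
def subF (k : ℕ) (u : Tm) : Fm → Fm
  | .atom p ts => .atom p (subTs k u ts)
  | .and A B => .and (subF k u A) (subF k u B)
  | .or A B => .or (subF k u A) (subF k u B)
  | .imp A B => .imp (subF k u A) (subF k u B)
  | .not A => .not (subF k u A)
  | .all A => .all (subF (k+1) (liftT 0 u) A)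
  | .ex A => .ex (subF (k+1) (liftT 0 u) A)
end

/-- instantiate the outermost bound variable of `A` with the term `t`:  A(t) -/
def inst0 (A : Fm) (t : Tm) : Fm := subF 0 t A

/-! substitution of a term for a *free* variable -/
mutual
def sfvT (a : ℕ) (u : Tm) : Tm → Tm
  | .bvar n => .bvar n
  | .fvar b => if b = a then u else .fvar b
  | .func f ts => .func f (sfvTs a u ts)
  | .eps A => .eps (sfvF a (liftT 0 u) A)
def sfvTs (a : ℕ) (u : Tm) : Tms → Tms
  | .nil => .nil
  | .cons t ts => .cons (sfvT a u t) (sfvTs a u ts)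
def sfvF (a : ℕ) (u : Tm) : Fm → Fm
  | .atom p ts => .atom p (sfvTs a u ts)
  | .and A B => .and (sfvF a u A) (sfvF a u B)
  | .or A B => .or (sfvF a u A) (sfvF a u B)
  | .imp A B => .imp (sfvF a u A) (sfvF a u B)
  | .not A => .not (sfvF a u A)
  | .all A => .all (sfvF a (liftT 0 u) A)
  | .ex A => .ex (sfvF a (liftT 0 u) A)
end

/-! abstraction of a free variable into a bound variable (for universal closure) -/
mutual
def abT (a k : ℕ) : Tm → Tm
  | .bvar n => .bvar n
  | .fvar b => if b = a then .bvar k else .fvar b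
  | .func f ts => .func f (abTs a k ts)
  | .eps A => .eps (abF a (k+1) A)
def abTs (a k : ℕ) : Tms → Tms
  | .nil => .nil
  | .cons t ts => .cons (abT a k t) (abTs a k ts)
def abF (a k : ℕ) : Fm → Fm
  | .atom p ts => .atom p (abTs a k ts)
  | .and A B => .and (abF a k A) (abF a k B)
  | .or A B => .or (abF a k A) (abF a k B)
  | .imp A B => .imp (abF a k A) (abF a k B)
  | .not A => .not (abF a k A)
  | .all A => .all (abF a (k+1) A)
  | .ex A => .ex (abF a (k+1) A)
end

/-! free variables -/
mutual
def fvT : Tm → List ℕ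
  | .bvar _ => []
  | .fvar a => [a]
  | .func _ ts => fvTs ts
  | .eps A => fvF A
def fvTs : Tms → List ℕ
  | .nil => []
  | .cons t ts => fvT t ++ fvTs ts
def fvF : Fm → List ℕ
  | .atom _ ts => fvTs ts
  | .and A B => fvF A ++ fvF B
  | .or A B => fvF A ++ fvF B
  | .imp A B => fvF A ++ fvF B
  | .not A => fvF A
  | .all A => fvF A
  | .ex A => fvF A
end

/-! function symbols occurring in an expression -/
mutual
def fsT : Tm → List ℕ
  | .bvar _ => []
  | .fvar _ => []
  | .func f ts => f :: fsTs ts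
  | .eps A => fsF A
def fsTs : Tms → List ℕ
  | .nil => []
  | .cons t ts => fsT t ++ fsTs ts
def fsF : Fm → List ℕ
  | .atom _ ts => fsTs ts
  | .and A B => fsF A ++ fsF B
  | .or A B => fsF A ++ fsF B
  | .imp A B => fsF A ++ fsF B
  | .not A => fsF A
  | .all A => fsF A
  | .ex A => fsF A
end

/-! number of symbols (size) -/
mutual
def szT : Tm → ℕ
  | .bvar _ => 1
  | .fvar _ => 1
  | .func _ ts => 1 + szTs ts
  | .eps A => 1 + szF A
def szTs : Tms → ℕ
  | .nil => 0
  | .cons t ts => szT t + szTs ts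
def szF : Fm → ℕ
  | .atom _ ts => 1 + szTs ts
  | .and A B => 1 + szF A + szF B
  | .or A B => 1 + szF A + szF B
  | .imp A B => 1 + szF A + szF B
  | .not A => 1 + szF A
  | .all A => 1 + szF A
  | .ex A => 1 + szF A
end

/-! epsilon-freeness (first-order language) and quantifier-freeness (epsilon language) -/
mutual
def noEpsT : Tm → Bool
  | .bvar _ => true
  | .fvar _ => true
  | .func _ ts => noEpsTs ts
  | .eps _ => false
def noEpsTs : Tms → Bool
  | .nil => true
  | .cons t ts => noEpsT t && noEpsTs ts
def noEpsF : Fm → Bool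
  | .atom _ ts => noEpsTs ts
  | .and A B => noEpsF A && noEpsF B
  | .or A B => noEpsF A && noEpsF B
  | .imp A B => noEpsF A && noEpsF B
  | .not A => noEpsF A
  | .all A => noEpsF A
  | .ex A => noEpsF A
end

/-- `A` is a formula of the first-order language: it contains no epsilon terms. -/
def isFO (A : Fm) : Bool := noEpsF A

/-- quantifier-freeness: `A` belongs to the language of the epsilon calculus
(propositional language over epsilon terms) iff `qfree A`. -/
def qfree : Fm → Bool
  | .atom _ _ => true
  | .and A B => qfree A && qfree B
  | .or A B => qfree A && qfree B
  | .imp A B => qfree A && qfree B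
  | .not A => qfree A
  | .all _ => false
  | .ex _ => false

/-- The epsilon translation [A]^ε of a formula. -/
def epsT : Fm → Fm
  | .atom p ts => .atom p ts
  | .and A B => .and (epsT A) (epsT B)
  | .or A B => .or (epsT A) (epsT B)
  | .imp A B => .imp (epsT A) (epsT B)
  | .not A => .not (epsT A)
  | .ex A => inst0 (epsT A) (.eps (epsT A))
  | .all A => inst0 (epsT A) (.eps (.not (epsT A)))

/-! ## The matrix A^M of a formula: delete all quantifiers and replace the
variables bound by them by fresh free variables. -/
mutual
def mxT (b d : ℕ) : Tm → Tm
  | .bvar n => if n < d then .fvar (b + (d - 1 - n)) else .bvar (n - d)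
  | .fvar a => .fvar a
  | .func f ts => .func f (mxTs b d ts)
  | .eps A => .eps A          -- (the matrix is only used on epsilon-free formulas)
def mxTs (b d : ℕ) : Tms → Tms
  | .nil => .nil
  | .cons t ts => .cons (mxT b d t) (mxTs b d ts)
def mxF (b d : ℕ) : Fm → Fm
  | .atom p ts => .atom p (mxTs b d ts)
  | .and A B => .and (mxF b d A) (mxF b d B)
  | .or A B => .or (mxF b d A) (mxF b d B)
  | .imp A B => .imp (mxF b d A) (mxF b d B)
  | .not A => .not (mxF b d A)
  | .all A => mxF b (d+1) A
  | .ex A => mxF b (d+1) A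
end

def maxFv (A : Fm) : ℕ := (fvF A).foldr max 0

/-- the matrix A^M of A -/
def matrix (A : Fm) : Fm := mxF (maxFv A + 1) 0 A

/-- universal closure ∀x̄ A over all free variables of A -/
def uclose (A : Fm) : Fm :=
  ((fvF A).dedup).foldr (fun a B => Fm.all (abF a 0 B)) A

/-! ## Weak/strong quantifier occurrences.
`posW A` : all quantifier occurrences of `A` are weak when `A` occurs in the
succedent; `negW A` : likewise for the antecedent. -/
mutual
def posW : Fm → Bool
  | .atom _ _ => true
  | .and A B => posW A && posW B
  | .or A B => posW A && posW B
  | .imp A B => negW A && posW B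
  | .not A => negW A
  | .all _ => false
  | .ex A => posW A
def negW : Fm → Bool
  | .atom _ _ => true
  | .and A B => negW A && negW B
  | .or A B => negW A && negW B
  | .imp A B => posW A && negW B
  | .not A => posW A
  | .all A => negW A
  | .ex _ => false
end

/-- the sequent Γ ⊢ Δ contains weak quantifier occurrences only -/
def WeakSeq (Γ Δ : List Fm) : Prop :=
  (∀ A ∈ Γ, negW A = true) ∧ (∀ A ∈ Δ, posW A = true)

/-- the sequent Γ ⊢ Δ is in the first-order language -/
def FOSeq (Γ Δ : List Fm) : Prop :=
  (∀ A ∈ Γ, isFO A = true) ∧ (∀ A ∈ Δ, isFO A = true)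

/-- the sequent Γ ⊢ Δ is in the language of the epsilon calculus -/
def EpsSeq (Γ Δ : List Fm) : Prop :=
  (∀ A ∈ Γ, qfree A = true) ∧ (∀ A ∈ Δ, qfree A = true)

def fvSeq (Γ Δ : List Fm) : List ℕ :=
  (Γ ++ Δ).foldr (fun A l => fvF A ++ l) []

def fsSeq (Γ Δ : List Fm) : List ℕ :=
  (Γ ++ Δ).foldr (fun A l => fsF A ++ l) []

def seqSize (Γ Δ : List Fm) : ℕ :=
  (Γ ++ Δ).foldr (fun A n => szF A + n) 0


/-! ## LK derivation trees.
`Deriv Γ Δ` are derivation trees of the sequent Γ ⊢ Δ built from the rules of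
Gentzen's LK, where the strong quantifier rules `allR`/`exL` carry an
eigenvariable but *no* correctness condition; the various eigenvariable
disciplines (LK, LK⁺, LK⁺⁺) are imposed as predicates on the trees below. -/
inductive Deriv : List Fm → List Fm → Type where
  | ax (A : Fm) : Deriv [A] [A]
  | andL (A B : Fm) (Γ Δ : List Fm) :
      Deriv (A :: B :: Γ) Δ → Deriv (Fm.and A B :: Γ) Δ
  | andR (A B : Fm) (Γ₁ Δ₁ Γ₂ Δ₂ : List Fm) :
      Deriv Γ₁ (A :: Δ₁) → Deriv Γ₂ (B :: Δ₂) →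
      Deriv (Γ₁ ++ Γ₂) (Fm.and A B :: (Δ₁ ++ Δ₂))
  | orL (A B : Fm) (Γ₁ Δ₁ Γ₂ Δ₂ : List Fm) :
      Deriv (A :: Γ₁) Δ₁ → Deriv (B :: Γ₂) Δ₂ →
      Deriv (Fm.or A B :: (Γ₁ ++ Γ₂)) (Δ₁ ++ Δ₂)
  | orR (A B : Fm) (Γ Δ : List Fm) :
      Deriv Γ (A :: B :: Δ) → Deriv Γ (Fm.or A B :: Δ)
  | impL (A B : Fm) (Γ₁ Δ₁ Γ₂ Δ₂ : List Fm) :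
      Deriv Γ₁ (A :: Δ₁) → Deriv (B :: Γ₂) Δ₂ →
      Deriv (Fm.imp A B :: (Γ₁ ++ Γ₂)) (Δ₁ ++ Δ₂)
  | impR (A B : Fm) (Γ Δ : List Fm) :
      Deriv (A :: Γ) (B :: Δ) → Deriv Γ (Fm.imp A B :: Δ)
  | notL (A : Fm) (Γ Δ : List Fm) :
      Deriv Γ (A :: Δ) → Deriv (Fm.not A :: Γ) Δ
  | notR (A : Fm) (Γ Δ : List Fm) :
      Deriv (A :: Γ) Δ → Deriv Γ (Fm.not A :: Δ)
  | wL (A : Fm) (Γ Δ : List Fm) : Deriv Γ Δ → Deriv (A :: Γ) Δ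
  | wR (A : Fm) (Γ Δ : List Fm) : Deriv Γ Δ → Deriv Γ (A :: Δ)
  | cL (A : Fm) (Γ Δ : List Fm) : Deriv (A :: A :: Γ) Δ → Deriv (A :: Γ) Δ
  | cR (A : Fm) (Γ Δ : List Fm) : Deriv Γ (A :: A :: Δ) → Deriv Γ (A :: Δ)
  | cut (A : Fm) (Γ₁ Δ₁ Γ₂ Δ₂ : List Fm) :
      Deriv Γ₁ (A :: Δ₁) → Deriv (A :: Γ₂) Δ₂ →
      Deriv (Γ₁ ++ Γ₂) (Δ₁ ++ Δ₂)
  | allL (t : Tm) (A : Fm) (Γ Δ : List Fm) :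
      Deriv (inst0 A t :: Γ) Δ → Deriv (Fm.all A :: Γ) Δ
  | allR (a : ℕ) (A : Fm) (Γ Δ : List Fm) :
      Deriv Γ (inst0 A (Tm.fvar a) :: Δ) → Deriv Γ (Fm.all A :: Δ)
  | exL (a : ℕ) (A : Fm) (Γ Δ : List Fm) :
      Deriv (inst0 A (Tm.fvar a) :: Γ) Δ → Deriv (Fm.ex A :: Γ) Δ
  | exR (t : Tm) (A : Fm) (Γ Δ : List Fm) :
      Deriv Γ (inst0 A t :: Δ) → Deriv Γ (Fm.ex A :: Δ)
  | permL (Γ Γ' Δ : List Fm) : Γ.Perm Γ' → Deriv Γ Δ → Deriv Γ' Δ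
  | permR (Γ Δ Δ' : List Fm) : Δ.Perm Δ' → Deriv Γ Δ → Deriv Γ Δ'

namespace Deriv

/-- the size of a derivation: the number of inference steps occurring in it -/
def size : ∀ {Γ Δ}, Deriv Γ Δ → ℕ
  | _, _, ax _ => 1
  | _, _, andL _ _ _ _ d => d.size + 1
  | _, _, andR _ _ _ _ _ _ d e => d.size + e.size + 1
  | _, _, orL _ _ _ _ _ _ d e => d.size + e.size + 1
  | _, _, orR _ _ _ _ d => d.size + 1
  | _, _, impL _ _ _ _ _ _ d e => d.size + e.size + 1
  | _, _, impR _ _ _ _ d => d.size + 1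
  | _, _, notL _ _ _ d => d.size + 1
  | _, _, notR _ _ _ d => d.size + 1
  | _, _, wL _ _ _ d => d.size + 1
  | _, _, wR _ _ _ d => d.size + 1
  | _, _, cL _ _ _ d => d.size + 1
  | _, _, cR _ _ _ d => d.size + 1
  | _, _, cut _ _ _ _ _ d e => d.size + e.size + 1
  | _, _, allL _ _ _ _ d => d.size + 1
  | _, _, allR _ _ _ _ d => d.size + 1
  | _, _, exL _ _ _ _ d => d.size + 1
  | _, _, exR _ _ _ _ d => d.size + 1
  | _, _, permL _ _ _ _ d => d.size + 1
  | _, _, permR _ _ _ _ d => d.size + 1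

/-- the list of cut formulas occurring in a derivation -/
def cutFms : ∀ {Γ Δ}, Deriv Γ Δ → List Fm
  | _, _, ax _ => []
  | _, _, andL _ _ _ _ d => d.cutFms
  | _, _, andR _ _ _ _ _ _ d e => d.cutFms ++ e.cutFms
  | _, _, orL _ _ _ _ _ _ d e => d.cutFms ++ e.cutFms
  | _, _, orR _ _ _ _ d => d.cutFms
  | _, _, impL _ _ _ _ _ _ d e => d.cutFms ++ e.cutFms
  | _, _, impR _ _ _ _ d => d.cutFms
  | _, _, notL _ _ _ d => d.cutFms
  | _, _, notR _ _ _ d => d.cutFms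
  | _, _, wL _ _ _ d => d.cutFms
  | _, _, wR _ _ _ d => d.cutFms
  | _, _, cL _ _ _ d => d.cutFms
  | _, _, cR _ _ _ d => d.cutFms
  | _, _, cut A _ _ _ _ d e => A :: (d.cutFms ++ e.cutFms)
  | _, _, allL _ _ _ _ d => d.cutFms
  | _, _, allR _ _ _ _ d => d.cutFms
  | _, _, exL _ _ _ _ d => d.cutFms
  | _, _, exR _ _ _ _ d => d.cutFms
  | _, _, permL _ _ _ _ d => d.cutFms
  | _, _, permR _ _ _ _ d => d.cutFms

/-- data of the strong quantifier inferences of a derivation: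
(eigenvariable, auxiliary formula, main formula) -/
def strongs : ∀ {Γ Δ}, Deriv Γ Δ → List (ℕ × Fm × Fm)
  | _, _, ax _ => []
  | _, _, andL _ _ _ _ d => d.strongs
  | _, _, andR _ _ _ _ _ _ d e => d.strongs ++ e.strongs
  | _, _, orL _ _ _ _ _ _ d e => d.strongs ++ e.strongs
  | _, _, orR _ _ _ _ d => d.strongs
  | _, _, impL _ _ _ _ _ _ d e => d.strongs ++ e.strongs
  | _, _, impR _ _ _ _ d => d.strongs
  | _, _, notL _ _ _ d => d.strongs
  | _, _, notR _ _ _ d => d.strongs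
  | _, _, wL _ _ _ d => d.strongs
  | _, _, wR _ _ _ d => d.strongs
  | _, _, cL _ _ _ d => d.strongs
  | _, _, cR _ _ _ d => d.strongs
  | _, _, cut _ _ _ _ _ d e => d.strongs ++ e.strongs
  | _, _, allL _ _ _ _ d => d.strongs
  | _, _, allR a A _ _ d => (a, inst0 A (Tm.fvar a), Fm.all A) :: d.strongs
  | _, _, exL a A _ _ d => (a, inst0 A (Tm.fvar a), Fm.ex A) :: d.strongs
  | _, _, exR _ _ _ _ d => d.strongs
  | _, _, permL _ _ _ _ d => d.strongs
  | _, _, permR _ _ _ _ d => d.strongs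

/-- the standard (local) eigenvariable conditions of LK: the eigenvariable of a
strong quantifier inference does not occur free in its conclusion -/
def Std : ∀ {Γ Δ}, Deriv Γ Δ → Prop
  | _, _, ax _ => True
  | _, _, andL _ _ _ _ d => d.Std
  | _, _, andR _ _ _ _ _ _ d e => d.Std ∧ e.Std
  | _, _, orL _ _ _ _ _ _ d e => d.Std ∧ e.Std
  | _, _, orR _ _ _ _ d => d.Std
  | _, _, impL _ _ _ _ _ _ d e => d.Std ∧ e.Std
  | _, _, impR _ _ _ _ d => d.Std
  | _, _, notL _ _ _ d => d.Std
  | _, _, notR _ _ _ d => d.Std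
  | _, _, wL _ _ _ d => d.Std
  | _, _, wR _ _ _ d => d.Std
  | _, _, cL _ _ _ d => d.Std
  | _, _, cR _ _ _ d => d.Std
  | _, _, cut _ _ _ _ _ d e => d.Std ∧ e.Std
  | _, _, allL _ _ _ _ d => d.Std
  | _, _, allR a A Γ Δ d => a ∉ fvSeq Γ (Fm.all A :: Δ) ∧ d.Std
  | _, _, exL a A Γ Δ d => a ∉ fvSeq (Fm.ex A :: Γ) Δ ∧ d.Std
  | _, _, exR _ _ _ _ d => d.Std
  | _, _, permL _ _ _ _ d => d.Std
  | _, _, permR _ _ _ _ d => d.Std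

end Deriv

/-- the side variable relation `<_φ`: `b` is a side variable of `a` in `φ` if `φ`
contains a strong quantifier inference with eigenvariable `a` whose auxiliary
formula contains the free variable `b` -/
def sideRel {Γ Δ} (d : Deriv Γ Δ) (a b : ℕ) : Prop :=
  ∃ e ∈ d.strongs, e.1 = a ∧ b ∈ fvF e.2.1 ∧ b ≠ a

/-- acyclicity of a binary relation -/
def Acyc (r : ℕ → ℕ → Prop) : Prop := ∀ x, ¬ Relation.TransGen r x x

/-- LK⁺-suitability of (all strong quantifier inferences of) a derivation:
substitutability, the side variable condition, and weak regularity. -/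
def SuitP {Γ Δ} (d : Deriv Γ Δ) : Prop :=
  (∀ e ∈ d.strongs, e.1 ∉ fvSeq Γ Δ) ∧
  Acyc (sideRel d) ∧
  (d.strongs.map (·.1)).Nodup

/-- LK⁺⁺-suitability: substitutability, the side variable condition, and very
weak regularity (equal eigenvariables only for equal main formulas). -/
def SuitPP {Γ Δ} (d : Deriv Γ Δ) : Prop :=
  (∀ e ∈ d.strongs, e.1 ∉ fvSeq Γ Δ) ∧
  Acyc (sideRel d) ∧
  (∀ e₁ ∈ d.strongs, ∀ e₂ ∈ d.strongs, e₁.1 = e₂.1 → e₁.2.2 = e₂.2.2)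

/-! ## The sequent calculus Lε of the epsilon calculus:
atomic axioms, the propositional, structural and cut rules of LK, the weak
quantifier rules ∃_r and ∀_l producing epsilon terms, and a substitution rule
replacing the strong quantifier inferences. -/
inductive EDeriv : List Fm → List Fm → Type where
  | ax (p : ℕ) (ts : Tms) : EDeriv [Fm.atom p ts] [Fm.atom p ts]
  | andL (A B : Fm) (Γ Δ : List Fm) :
      EDeriv (A :: B :: Γ) Δ → EDeriv (Fm.and A B :: Γ) Δ
  | andR (A B : Fm) (Γ₁ Δ₁ Γ₂ Δ₂ : List Fm) :
      EDeriv Γ₁ (A :: Δ₁) → EDeriv Γ₂ (B :: Δ₂) →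
      EDeriv (Γ₁ ++ Γ₂) (Fm.and A B :: (Δ₁ ++ Δ₂))
  | orL (A B : Fm) (Γ₁ Δ₁ Γ₂ Δ₂ : List Fm) :
      EDeriv (A :: Γ₁) Δ₁ → EDeriv (B :: Γ₂) Δ₂ →
      EDeriv (Fm.or A B :: (Γ₁ ++ Γ₂)) (Δ₁ ++ Δ₂)
  | orR (A B : Fm) (Γ Δ : List Fm) :
      EDeriv Γ (A :: B :: Δ) → EDeriv Γ (Fm.or A B :: Δ)
  | impL (A B : Fm) (Γ₁ Δ₁ Γ₂ Δ₂ : List Fm) :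
      EDeriv Γ₁ (A :: Δ₁) → EDeriv (B :: Γ₂) Δ₂ →
      EDeriv (Fm.imp A B :: (Γ₁ ++ Γ₂)) (Δ₁ ++ Δ₂)
  | impR (A B : Fm) (Γ Δ : List Fm) :
      EDeriv (A :: Γ) (B :: Δ) → EDeriv Γ (Fm.imp A B :: Δ)
  | notL (A : Fm) (Γ Δ : List Fm) :
      EDeriv Γ (A :: Δ) → EDeriv (Fm.not A :: Γ) Δ
  | notR (A : Fm) (Γ Δ : List Fm) :
      EDeriv (A :: Γ) Δ → EDeriv Γ (Fm.not A :: Δ)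
  | wL (A : Fm) (Γ Δ : List Fm) : EDeriv Γ Δ → EDeriv (A :: Γ) Δ
  | wR (A : Fm) (Γ Δ : List Fm) : EDeriv Γ Δ → EDeriv Γ (A :: Δ)
  | cL (A : Fm) (Γ Δ : List Fm) : EDeriv (A :: A :: Γ) Δ → EDeriv (A :: Γ) Δ
  | cR (A : Fm) (Γ Δ : List Fm) : EDeriv Γ (A :: A :: Δ) → EDeriv Γ (A :: Δ)
  | cut (A : Fm) (Γ₁ Δ₁ Γ₂ Δ₂ : List Fm) :
      EDeriv Γ₁ (A :: Δ₁) → EDeriv (A :: Γ₂) Δ₂ →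
      EDeriv (Γ₁ ++ Γ₂) (Δ₁ ++ Δ₂)
  | allL (t : Tm) (A : Fm) (Γ Δ : List Fm) :
      EDeriv (inst0 A t :: Γ) Δ →
      EDeriv (inst0 A (Tm.eps (Fm.not A)) :: Γ) Δ
  | exR (t : Tm) (A : Fm) (Γ Δ : List Fm) :
      EDeriv Γ (inst0 A t :: Δ) →
      EDeriv Γ (inst0 A (Tm.eps A) :: Δ)
  | subst (a : ℕ) (t : Tm) (Γ Δ : List Fm) :
      EDeriv Γ Δ → EDeriv (Γ.map (sfvF a t)) (Δ.map (sfvF a t))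
  | permL (Γ Γ' Δ : List Fm) : Γ.Perm Γ' → EDeriv Γ Δ → EDeriv Γ' Δ
  | permR (Γ Δ Δ' : List Fm) : Δ.Perm Δ' → EDeriv Γ Δ → EDeriv Γ Δ'

namespace EDeriv

/-- the size of an Lε derivation -/
def size : ∀ {Γ Δ}, EDeriv Γ Δ → ℕ
  | _, _, ax _ _ => 1
  | _, _, andL _ _ _ _ d => d.size + 1
  | _, _, andR _ _ _ _ _ _ d e => d.size + e.size + 1
  | _, _, orL _ _ _ _ _ _ d e => d.size + e.size + 1
  | _, _, orR _ _ _ _ d => d.size + 1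
  | _, _, impL _ _ _ _ _ _ d e => d.size + e.size + 1
  | _, _, impR _ _ _ _ d => d.size + 1
  | _, _, notL _ _ _ d => d.size + 1
  | _, _, notR _ _ _ d => d.size + 1
  | _, _, wL _ _ _ d => d.size + 1
  | _, _, wR _ _ _ d => d.size + 1
  | _, _, cL _ _ _ d => d.size + 1
  | _, _, cR _ _ _ d => d.size + 1
  | _, _, cut _ _ _ _ _ d e => d.size + e.size + 1
  | _, _, allL _ _ _ _ d => d.size + 1
  | _, _, exR _ _ _ _ d => d.size + 1
  | _, _, subst _ _ _ _ d => d.size + 1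
  | _, _, permL _ _ _ _ d => d.size + 1
  | _, _, permR _ _ _ _ d => d.size + 1

/-- the list of cut formulas occurring in an Lε derivation -/
def cutFms : ∀ {Γ Δ}, EDeriv Γ Δ → List Fm
  | _, _, ax _ _ => []
  | _, _, andL _ _ _ _ d => d.cutFms
  | _, _, andR _ _ _ _ _ _ d e => d.cutFms ++ e.cutFms
  | _, _, orL _ _ _ _ _ _ d e => d.cutFms ++ e.cutFms
  | _, _, orR _ _ _ _ d => d.cutFms
  | _, _, impL _ _ _ _ _ _ d e => d.cutFms ++ e.cutFms
  | _, _, impR _ _ _ _ d => d.cutFms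
  | _, _, notL _ _ _ d => d.cutFms
  | _, _, notR _ _ _ d => d.cutFms
  | _, _, wL _ _ _ d => d.cutFms
  | _, _, wR _ _ _ d => d.cutFms
  | _, _, cL _ _ _ d => d.cutFms
  | _, _, cR _ _ _ d => d.cutFms
  | _, _, cut A _ _ _ _ d e => A :: (d.cutFms ++ e.cutFms)
  | _, _, allL _ _ _ _ d => d.cutFms
  | _, _, exR _ _ _ _ d => d.cutFms
  | _, _, subst _ _ _ _ d => d.cutFms
  | _, _, permL _ _ _ _ d => d.cutFms
  | _, _, permR _ _ _ _ d => d.cutFms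

end EDeriv

/-! ## Elementary functions and polynomial bounds -/

/-- `iterExp k n` is the `k`-fold iterated exponential 2^2^...^n. -/
def iterExp : ℕ → ℕ → ℕ
  | 0, n => n
  | k+1, n => 2 ^ iterExp k n

/-- A function ℕ → ℕ is elementary (in the sense of Kalmár: definable by a
quantifier-free formula from +, ×, and x ↦ 2^x) iff it is majorized by some
fixed iterated exponential; we use this growth-rate characterization. -/
def IsElementary (f : ℕ → ℕ) : Prop := ∃ k, ∀ n, f n ≤ iterExp k n

/-- `g` is polynomially bounded -/
def PolyBdd (g : ℕ → ℕ) : Prop := ∃ p : Polynomial ℕ, ∀ n, g n ≤ p.eval n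

/-! ## Skolemization (relationally): `SkP F A B` (`SkN F A B`) holds if `B` is
obtained from `A`, occurring in the succedent (antecedent), by replacing the
strong quantifiers by terms built from fresh function symbols in `F`. -/
mutual
inductive SkP (F : ℕ → Prop) : Fm → Fm → Prop where
  | atom (p ts) : SkP F (Fm.atom p ts) (Fm.atom p ts)
  | and {A A' B B'} : SkP F A A' → SkP F B B' → SkP F (Fm.and A B) (Fm.and A' B')
  | or {A A' B B'} : SkP F A A' → SkP F B B' → SkP F (Fm.or A B) (Fm.or A' B')
  | imp {A A' B B'} : SkN F A A' → SkP F B B' → SkP F (Fm.imp A B) (Fm.imp A' B')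
  | not {A A'} : SkN F A A' → SkP F (Fm.not A) (Fm.not A')
  | ex {A A'} : SkP F A A' → SkP F (Fm.ex A) (Fm.ex A')
  | all {A B} (f : ℕ) (ts : Tms) : F f →
      SkP F (inst0 A (Tm.func f ts)) B → SkP F (Fm.all A) B
inductive SkN (F : ℕ → Prop) : Fm → Fm → Prop where
  | atom (p ts) : SkN F (Fm.atom p ts) (Fm.atom p ts)
  | and {A A' B B'} : SkN F A A' → SkN F B B' → SkN F (Fm.and A B) (Fm.and A' B')
  | or {A A' B B'} : SkN F A A' → SkN F B B' → SkN F (Fm.or A B) (Fm.or A' B')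
  | imp {A A' B B'} : SkP F A A' → SkN F B B' → SkN F (Fm.imp A B) (Fm.imp A' B')
  | not {A A'} : SkP F A A' → SkN F (Fm.not A) (Fm.not A')
  | all {A A'} : SkN F A A' → SkN F (Fm.all A) (Fm.all A')
  | ex {A B} (f : ℕ) (ts : Tms) : F f →
      SkN F (inst0 A (Tm.func f ts)) B → SkN F (Fm.ex A) B
end

/-- `S'` is a Skolemization of the sequent `S` using fresh function symbols from `F` -/
def SkolemSeq (F : ℕ → Prop) (S S' : List Fm × List Fm) : Prop :=
  List.Forall₂ (SkN F) S.1 S'.1 ∧ List.Forall₂ (SkP F) S.2 S'.2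



/-! ## Renaming of free variables -/
mutual
def renT (ρ : ℕ → ℕ) : Tm → Tm
  | .bvar n => .bvar n
  | .fvar b => .fvar (ρ b)
  | .func f ts => .func f (renTs ρ ts)
  | .eps A => .eps (renF ρ A)
def renTs (ρ : ℕ → ℕ) : Tms → Tms
  | .nil => .nil
  | .cons t ts => .cons (renT ρ t) (renTs ρ ts)
def renF (ρ : ℕ → ℕ) : Fm → Fm
  | .atom p ts => .atom p (renTs ρ ts)
  | .and A B => .and (renF ρ A) (renF ρ B)
  | .or A B => .or (renF ρ A) (renF ρ B)
  | .imp A B => .imp (renF ρ A) (renF ρ B)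
  | .not A => .not (renF ρ A)
  | .all A => .all (renF ρ A)
  | .ex A => .ex (renF ρ A)
end

mutual
theorem renT_lift (ρ : ℕ → ℕ) (k : ℕ) : ∀ t, renT ρ (liftT k t) = liftT k (renT ρ t)
  | .bvar n => by simp only [liftT, renT]; split <;> simp [renT]
  | .fvar b => by simp [liftT, renT]
  | .func f ts => by simp [liftT, renT, renTs_lift ρ k ts]
  | .eps A => by simp [liftT, renT, renF_lift ρ (k+1) A]
theorem renTs_lift (ρ : ℕ → ℕ) (k : ℕ) : ∀ t, renTs ρ (liftTs k t) = liftTs k (renTs ρ t)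
  | .nil => by simp [liftTs, renTs]
  | .cons t ts => by simp [liftTs, renTs, renT_lift ρ k t, renTs_lift ρ k ts]
theorem renF_lift (ρ : ℕ → ℕ) (k : ℕ) : ∀ t, renF ρ (liftF k t) = liftF k (renF ρ t)
  | .atom p ts => by simp [liftF, renF, renTs_lift ρ k ts]
  | .and A B => by simp [liftF, renF, renF_lift ρ k A, renF_lift ρ k B]
  | .or A B => by simp [liftF, renF, renF_lift ρ k A, renF_lift ρ k B]
  | .imp A B => by simp [liftF, renF, renF_lift ρ k A, renF_lift ρ k B]
  | .not A => by simp [liftF, renF, renF_lift ρ k A]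
  | .all A => by simp [liftF, renF, renF_lift ρ (k+1) A]
  | .ex A => by simp [liftF, renF, renF_lift ρ (k+1) A]
end

mutual
theorem renT_sub (ρ : ℕ → ℕ) (k : ℕ) (u : Tm) :
    ∀ t, renT ρ (subT k u t) = subT k (renT ρ u) (renT ρ t)
  | .bvar n => by
      simp only [subT, renT]
      split
      · rfl
      · split <;> simp [renT]
  | .fvar b => by simp [subT, renT]
  | .func f ts => by simp [subT, renT, renTs_sub ρ k u ts]
  | .eps A => by simp [subT, renT, renF_sub ρ (k+1) _ A, renT_lift]
theorem renTs_sub (ρ : ℕ → ℕ) (k : ℕ) (u : Tm) :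
    ∀ t, renTs ρ (subTs k u t) = subTs k (renT ρ u) (renTs ρ t)
  | .nil => by simp [subTs, renTs]
  | .cons t ts => by simp [subTs, renTs, renT_sub ρ k u t, renTs_sub ρ k u ts]
theorem renF_sub (ρ : ℕ → ℕ) (k : ℕ) (u : Tm) :
    ∀ t, renF ρ (subF k u t) = subF k (renT ρ u) (renF ρ t)
  | .atom p ts => by simp [subF, renF, renTs_sub ρ k u ts]
  | .and A B => by simp [subF, renF, renF_sub ρ k u A, renF_sub ρ k u B]
  | .or A B => by simp [subF, renF, renF_sub ρ k u A, renF_sub ρ k u B]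
  | .imp A B => by simp [subF, renF, renF_sub ρ k u A, renF_sub ρ k u B]
  | .not A => by simp [subF, renF, renF_sub ρ k u A]
  | .all A => by simp [subF, renF, renF_sub ρ (k+1) _ A, renT_lift]
  | .ex A => by simp [subF, renF, renF_sub ρ (k+1) _ A, renT_lift]
end

theorem renF_inst0 (ρ : ℕ → ℕ) (A : Fm) (t : Tm) :
    renF ρ (inst0 A t) = inst0 (renF ρ A) (renT ρ t) := renF_sub ρ 0 t A

mutual
theorem renT_congr (ρ σ : ℕ → ℕ) : ∀ t, (∀ a ∈ fvT t, ρ a = σ a) → renT ρ t = renT σ t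
  | .bvar n, _ => by simp [renT]
  | .fvar b, h => by simp [renT, h b (by simp [fvT])]
  | .func f ts, h => by simp [renT, renTs_congr ρ σ ts h]
  | .eps A, h => by simp [renT, renF_congr ρ σ A h]
theorem renTs_congr (ρ σ : ℕ → ℕ) : ∀ t, (∀ a ∈ fvTs t, ρ a = σ a) → renTs ρ t = renTs σ t
  | .nil, _ => by simp [renTs]
  | .cons t ts, h => by
      simp only [fvTs, List.mem_append] at h
      simp [renTs, renT_congr ρ σ t (fun a ha => h a (Or.inl ha)),
        renTs_congr ρ σ ts (fun a ha => h a (Or.inr ha))]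
theorem renF_congr (ρ σ : ℕ → ℕ) : ∀ t, (∀ a ∈ fvF t, ρ a = σ a) → renF ρ t = renF σ t
  | .atom p ts, h => by simp [renF, renTs_congr ρ σ ts h]
  | .and A B, h => by
      simp only [fvF, List.mem_append] at h
      simp [renF, renF_congr ρ σ A (fun a ha => h a (Or.inl ha)),
        renF_congr ρ σ B (fun a ha => h a (Or.inr ha))]
  | .or A B, h => by
      simp only [fvF, List.mem_append] at h
      simp [renF, renF_congr ρ σ A (fun a ha => h a (Or.inl ha)),
        renF_congr ρ σ B (fun a ha => h a (Or.inr ha))]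
  | .imp A B, h => by
      simp only [fvF, List.mem_append] at h
      simp [renF, renF_congr ρ σ A (fun a ha => h a (Or.inl ha)),
        renF_congr ρ σ B (fun a ha => h a (Or.inr ha))]
  | .not A, h => by simp [renF, renF_congr ρ σ A h]
  | .all A, h => by simp [renF, renF_congr ρ σ A h]
  | .ex A, h => by simp [renF, renF_congr ρ σ A h]
end

mutual
theorem renT_id : ∀ t, renT id t = t
  | .bvar n => by simp [renT]
  | .fvar b => by simp [renT]
  | .func f ts => by simp [renT, renTs_id ts]
  | .eps A => by simp [renT, renF_id A]
theorem renTs_id : ∀ t, renTs id t = t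
  | .nil => by simp [renTs]
  | .cons t ts => by simp [renTs, renT_id t, renTs_id ts]
theorem renF_id : ∀ t, renF id t = t
  | .atom p ts => by simp [renF, renTs_id ts]
  | .and A B => by simp [renF, renF_id A, renF_id B]
  | .or A B => by simp [renF, renF_id A, renF_id B]
  | .imp A B => by simp [renF, renF_id A, renF_id B]
  | .not A => by simp [renF, renF_id A]
  | .all A => by simp [renF, renF_id A]
  | .ex A => by simp [renF, renF_id A]
end

theorem notMem_fvSeq {a : ℕ} {G D : List Fm} :
    a ∉ fvSeq G D ↔ (∀ X ∈ G, a ∉ fvF X) ∧ ∀ X ∈ D, a ∉ fvF X := by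
  have : ∀ l : List Fm, a ∉ l.foldr (fun A l => fvF A ++ l) [] ↔ ∀ X ∈ l, a ∉ fvF X := by
    intro l
    induction l with
    | nil => simp
    | cons x l ih => simp
  rw [fvSeq, this]
  simp only [List.mem_append]
  constructor
  · intro h; exact ⟨fun X hX => h X (Or.inl hX), fun X hX => h X (Or.inr hX)⟩
  · rintro ⟨h1, h2⟩ X (hX | hX)
    · exact h1 X hX
    · exact h2 X hX

/-! ## Bounded cut-free provability -/

/-- `G ⊢ D` has a cut-free LK-proof of size at most `s` -/
def Pr (G D : List Fm) (s : ℕ) : Prop :=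
  ∃ d : Deriv G D, d.Std ∧ d.cutFms = [] ∧ d.size ≤ s

theorem Pr.mono {G D s t} (h : Pr G D s) (hst : s ≤ t) : Pr G D t := by
  obtain ⟨d, h1, h2, h3⟩ := h
  exact ⟨d, h1, h2, h3.trans hst⟩

theorem Pr.pL {G G' D s} (h : Pr G D s) (p : G.Perm G') : Pr G' D (s+1) := by
  obtain ⟨d, h1, h2, h3⟩ := h
  exact ⟨.permL _ _ _ p d, h1, h2, by simp [Deriv.size, h3]⟩

theorem Pr.pR {G D D' s} (h : Pr G D s) (p : D.Perm D') : Pr G D' (s+1) := by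
  obtain ⟨d, h1, h2, h3⟩ := h
  exact ⟨.permR _ _ _ p d, h1, h2, by simp [Deriv.size, h3]⟩

theorem Pr.cL {A G D s} (h : Pr (A :: A :: G) D s) : Pr (A :: G) D (s+1) := by
  obtain ⟨d, h1, h2, h3⟩ := h
  exact ⟨.cL _ _ _ d, h1, h2, by simp [Deriv.size, h3]⟩

theorem Pr.cR {A G D s} (h : Pr G (A :: A :: D) s) : Pr G (A :: D) (s+1) := by
  obtain ⟨d, h1, h2, h3⟩ := h
  exact ⟨.cR _ _ _ d, h1, h2, by simp [Deriv.size, h3]⟩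

theorem Pr.wL {G D s} (h : Pr G D s) : ∀ G', Pr (G' ++ G) D (s + G'.length)
  | [] => h
  | A :: G' => by
    obtain ⟨d, h1, h2, h3⟩ := Pr.wL h G'
    exact ⟨.wL _ _ _ d, h1, h2, by simp [Deriv.size]; omega⟩

theorem Pr.wR {G D s} (h : Pr G D s) : ∀ D', Pr G (D' ++ D) (s + D'.length)
  | [] => h
  | A :: D' => by
    obtain ⟨d, h1, h2, h3⟩ := Pr.wR h D'
    exact ⟨.wR _ _ _ d, h1, h2, by simp [Deriv.size]; omega⟩

open Classical in
theorem Pr.conL {G D} : ∀ (G1 : List Fm) {s}, G1 ⊆ G → Pr (G1 ++ G) D s →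
    Pr G D (s + 3 * G1.length)
  | [], _, _, h => h
  | A :: G1, s, hs, h => by
    have hA : A ∈ G := hs (by simp)
    have p : G.Perm (A :: G.erase A) := List.perm_cons_erase hA
    have q : (G1 ++ G).Perm (A :: (G1 ++ G.erase A)) :=
      (p.append_left G1).trans List.perm_middle
    have h1 : Pr (A :: A :: (G1 ++ G.erase A)) D (s+1) := Pr.pL h (q.cons A)
    have h2 := Pr.pL h1.cL q.symm
    exact (Pr.conL G1 (fun x hx => hs (by simp [hx])) h2).mono (by simp; omega)

open Classical in
theorem Pr.conR {G D} : ∀ (D1 : List Fm) {s}, D1 ⊆ D → Pr G (D1 ++ D) s →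
    Pr G D (s + 3 * D1.length)
  | [], _, _, h => h
  | A :: D1, s, hs, h => by
    have hA : A ∈ D := hs (by simp)
    have p : D.Perm (A :: D.erase A) := List.perm_cons_erase hA
    have q : (D1 ++ D).Perm (A :: (D1 ++ D.erase A)) :=
      (p.append_left D1).trans List.perm_middle
    have h1 : Pr G (A :: A :: (D1 ++ D.erase A)) (s+1) := Pr.pR h (q.cons A)
    have h2 := Pr.pR h1.cR q.symm
    exact (Pr.conR D1 (fun x hx => hs (by simp [hx])) h2).mono (by simp; omega)

/-- all structural rules at once -/
theorem Pr.sub {G1 D1 G D s} (h : Pr G1 D1 s) (hG : G1 ⊆ G) (hD : D1 ⊆ D) :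
    Pr G D (s + 3 * (G1.length + D1.length) + G.length + D.length + 2) := by
  have h1 := Pr.conL G1 hG ((h.wL G).pL List.perm_append_comm)
  have h2 := Pr.conR D1 hD ((h1.wR D).pR List.perm_append_comm)
  exact h2.mono (by omega)

/-- contexts of a bounded weight -/
def Wt (G D : List Fm) (C : ℕ) : Prop := 10 * (G.length + D.length) + 10 ≤ C

theorem Pr.ax {G D C A} (w : Wt G D C) (h1 : A ∈ G) (h2 : A ∈ D) : Pr G D C := by
  have h : Pr [A] [A] 1 := ⟨.ax A, trivial, rfl, le_rfl⟩
  refine (h.sub (G := G) (D := D) (by simpa using h1) (by simpa using h2)).mono ?_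
  unfold Wt at w
  simp; omega

theorem Pr.andL {G D C A B s} (w : Wt G D C) (hm : Fm.and A B ∈ G)
    (h : Pr (A :: B :: G) D s) : Pr G D (s + C) := by
  obtain ⟨d, h1, h2, h3⟩ := h
  have h : Pr (Fm.and A B :: G) D (s+1) := ⟨.andL _ _ _ _ d, h1, h2, by simp [Deriv.size, h3]⟩
  refine (h.sub (G := G) (D := D) (by simp [hm]) (by simp)).mono ?_
  unfold Wt at w
  simp; omega

theorem Pr.orR {G D C A B s} (w : Wt G D C) (hm : Fm.or A B ∈ D)
    (h : Pr G (A :: B :: D) s) : Pr G D (s + C) := by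
  obtain ⟨d, h1, h2, h3⟩ := h
  have h : Pr G (Fm.or A B :: D) (s+1) := ⟨.orR _ _ _ _ d, h1, h2, by simp [Deriv.size, h3]⟩
  refine (h.sub (G := G) (D := D) (by simp) (by simp [hm])).mono ?_
  unfold Wt at w
  simp; omega

theorem Pr.impR {G D C A B s} (w : Wt G D C) (hm : Fm.imp A B ∈ D)
    (h : Pr (A :: G) (B :: D) s) : Pr G D (s + C) := by
  obtain ⟨d, h1, h2, h3⟩ := h
  have h : Pr G (Fm.imp A B :: D) (s+1) := ⟨.impR _ _ _ _ d, h1, h2, by simp [Deriv.size, h3]⟩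
  refine (h.sub (G := G) (D := D) (by simp) (by simp [hm])).mono ?_
  unfold Wt at w
  simp; omega

theorem Pr.notR {G D C A s} (w : Wt G D C) (hm : Fm.not A ∈ D)
    (h : Pr (A :: G) D s) : Pr G D (s + C) := by
  obtain ⟨d, h1, h2, h3⟩ := h
  have h : Pr G (Fm.not A :: D) (s+1) := ⟨.notR _ _ _ d, h1, h2, by simp [Deriv.size, h3]⟩
  refine (h.sub (G := G) (D := D) (by simp) (by simp [hm])).mono ?_
  unfold Wt at w
  simp; omega

theorem Pr.notL {G D C A s} (w : Wt G D C) (hm : Fm.not A ∈ G)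
    (h : Pr G (A :: D) s) : Pr G D (s + C) := by
  obtain ⟨d, h1, h2, h3⟩ := h
  have h : Pr (Fm.not A :: G) D (s+1) := ⟨.notL _ _ _ d, h1, h2, by simp [Deriv.size, h3]⟩
  refine (h.sub (G := G) (D := D) (by simp [hm]) (by simp)).mono ?_
  unfold Wt at w
  simp; omega

theorem Pr.andR {G D C A B s t} (w : Wt G D C) (hm : Fm.and A B ∈ D)
    (h : Pr G (A :: D) s) (h' : Pr G (B :: D) t) : Pr G D (s + t + C) := by
  obtain ⟨d, h1, h2, h3⟩ := h
  obtain ⟨e, k1, k2, k3⟩ := h'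
  have h : Pr (G ++ G) (Fm.and A B :: (D ++ D)) (s+t+1) :=
    ⟨.andR _ _ _ _ _ _ d e, ⟨h1, k1⟩, by simp [Deriv.cutFms, h2, k2],
      by simp [Deriv.size]; omega⟩
  refine (h.sub (G := G) (D := D) (by simp) (by simp [hm])).mono ?_
  unfold Wt at w
  simp; omega

theorem Pr.orL {G D C A B s t} (w : Wt G D C) (hm : Fm.or A B ∈ G)
    (h : Pr (A :: G) D s) (h' : Pr (B :: G) D t) : Pr G D (s + t + C) := by
  obtain ⟨d, h1, h2, h3⟩ := h
  obtain ⟨e, k1, k2, k3⟩ := h'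
  have h : Pr (Fm.or A B :: (G ++ G)) (D ++ D) (s+t+1) :=
    ⟨.orL _ _ _ _ _ _ d e, ⟨h1, k1⟩, by simp [Deriv.cutFms, h2, k2],
      by simp [Deriv.size]; omega⟩
  refine (h.sub (G := G) (D := D) (by simp [hm]) (by simp)).mono ?_
  unfold Wt at w
  simp; omega

theorem Pr.impL {G D C A B s t} (w : Wt G D C) (hm : Fm.imp A B ∈ G)
    (h : Pr G (A :: D) s) (h' : Pr (B :: G) D t) : Pr G D (s + t + C) := by
  obtain ⟨d, h1, h2, h3⟩ := h
  obtain ⟨e, k1, k2, k3⟩ := h'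
  have h : Pr (Fm.imp A B :: (G ++ G)) (D ++ D) (s+t+1) :=
    ⟨.impL _ _ _ _ _ _ d e, ⟨h1, k1⟩, by simp [Deriv.cutFms, h2, k2],
      by simp [Deriv.size]; omega⟩
  refine (h.sub (G := G) (D := D) (by simp [hm]) (by simp)).mono ?_
  unfold Wt at w
  simp; omega

theorem Pr.allL {G D C A u s} (w : Wt G D C) (hm : Fm.all A ∈ G)
    (h : Pr (inst0 A u :: G) D s) : Pr G D (s + C) := by
  obtain ⟨d, h1, h2, h3⟩ := h
  have h : Pr (Fm.all A :: G) D (s+1) := ⟨.allL u _ _ _ d, h1, h2, by simp [Deriv.size, h3]⟩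
  refine (h.sub (G := G) (D := D) (by simp [hm]) (by simp)).mono ?_
  unfold Wt at w
  simp; omega

theorem Pr.exR {G D C A u s} (w : Wt G D C) (hm : Fm.ex A ∈ D)
    (h : Pr G (inst0 A u :: D) s) : Pr G D (s + C) := by
  obtain ⟨d, h1, h2, h3⟩ := h
  have h : Pr G (Fm.ex A :: D) (s+1) := ⟨.exR u _ _ _ d, h1, h2, by simp [Deriv.size, h3]⟩
  refine (h.sub (G := G) (D := D) (by simp) (by simp [hm])).mono ?_
  unfold Wt at w
  simp; omega

theorem Pr.allR {G D C A a s} (w : Wt G D C) (hm : Fm.all A ∈ D) (ha : a ∉ fvSeq G D)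
    (h : Pr G (inst0 A (Tm.fvar a) :: D) s) : Pr G D (s + C) := by
  obtain ⟨d, h1, h2, h3⟩ := h
  have h : Pr G (Fm.all A :: D) (s+1) := by
    refine ⟨.allR a _ _ _ d, ⟨?_, h1⟩, h2, by simp [Deriv.size, h3]⟩
    rw [notMem_fvSeq] at ha ⊢
    refine ⟨ha.1, fun X hX => ?_⟩
    rcases List.mem_cons.1 hX with rfl | hX
    · exact ha.2 _ hm
    · exact ha.2 _ hX
  refine (h.sub (G := G) (D := D) (by simp) (by simp [hm])).mono ?_
  unfold Wt at w
  simp; omega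

theorem Pr.exL {G D C A a s} (w : Wt G D C) (hm : Fm.ex A ∈ G) (ha : a ∉ fvSeq G D)
    (h : Pr (inst0 A (Tm.fvar a) :: G) D s) : Pr G D (s + C) := by
  obtain ⟨d, h1, h2, h3⟩ := h
  have h : Pr (Fm.ex A :: G) D (s+1) := by
    refine ⟨.exL a _ _ _ d, ⟨?_, h1⟩, h2, by simp [Deriv.size, h3]⟩
    rw [notMem_fvSeq] at ha ⊢
    refine ⟨fun X hX => ?_, ha.2⟩
    rcases List.mem_cons.1 hX with rfl | hX
    · exact ha.1 _ hm
    · exact ha.1 _ hX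
  refine (h.sub (G := G) (D := D) (by simp [hm]) (by simp)).mono ?_
  unfold Wt at w
  simp; omega

/-! ## Propositional closing of a sequent -/

/-- `v` respects the outermost connective of a formula -/
def Compat (v : Fm → Prop) : Fm → Prop
  | .and A B => (v (.and A B) ↔ v A ∧ v B)
  | .or A B => (v (.or A B) ↔ v A ∨ v B)
  | .imp A B => (v (.imp A B) ↔ (v A → v B))
  | .not A => (v (.not A) ↔ ¬ v A)
  | _ => True

open Classical in
/-- If the maximal formula `F` of `P` is absent from the sequent it can be dropped. -/
theorem drop_max (P : Finset Fm) (G D : List Fm) (F : Fm) (hF : F ∈ P)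
    (hmax : ∀ X ∈ P, szF X ≤ szF F) (hG : F ∉ G) (hD : F ∉ D)
    (h : ∀ v : Fm → Prop, (∀ X ∈ P, Compat v X) → (∀ X ∈ G, v X) → (∀ X ∈ D, ¬ v X) → False)
    (v : Fm → Prop) (hv : ∀ X ∈ P.erase F, Compat v X) (h1 : ∀ X ∈ G, v X)
    (h2 : ∀ X ∈ D, ¬ v X) : False := by
  let b : Prop := match F with
    | .and A B => v A ∧ v B
    | .or A B => v A ∨ v B
    | .imp A B => v A → v B
    | .not A => ¬ v A
    | _ => True
  have key : ∀ X, X ≠ F → Function.update v F b X = v X := fun X hX =>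
    Function.update_of_ne hX _ _
  have keyF : Function.update v F b F = b := Function.update_self _ _ _
  refine h (Function.update v F b) ?_ ?_ ?_
  · intro X hX
    have hle := hmax X hX
    by_cases hXF : X = F
    · subst hXF
      have ne : ∀ Y, szF Y < szF X → Function.update v X b Y = v Y := by
        intro Y hY
        exact key Y (by rintro rfl; omega)
      cases X <;> simp only [Compat] <;> rw [keyF] <;>
        simp only [b] <;> (try rw [ne _ (by simp only [szF]; omega)]) <;>
        (try rw [ne _ (by simp only [szF]; omega)])
    · have hc := hv X (Finset.mem_erase.2 ⟨hXF, hX⟩)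
      have ne : ∀ Y, szF Y < szF X → Function.update v F b Y = v Y := by
        intro Y hY
        exact key Y (by rintro rfl; omega)
      cases X <;> simp only [Compat] at hc ⊢ <;> rw [key _ hXF] <;>
        (try rw [ne _ (by simp only [szF]; omega)]) <;>
        (try rw [ne _ (by simp only [szF]; omega)]) <;> exact hc
  · intro X hX
    rw [key X (by rintro rfl; exact hG hX)]
    exact h1 X hX
  · intro X hX
    rw [key X (by rintro rfl; exact hD hX)]
    exact h2 X hX

open Classical in
theorem closing (C : ℕ) : ∀ (k : ℕ) (P : Finset Fm) (G D : List Fm), P.card ≤ k →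
    10 * (G.length + D.length + 2 * k) + 10 ≤ C →
    (∀ v : Fm → Prop, (∀ X ∈ P, Compat v X) → (∀ X ∈ G, v X) → (∀ X ∈ D, ¬ v X) → False) →
    Pr G D (4 ^ k * C) := by
  intro k
  induction k with
  | zero =>
    intro P G D hP hC h
    have hP : P = ∅ := by simpa using hP
    subst hP
    have : ∃ A, A ∈ G ∧ A ∈ D := by
      by_contra hne
      push Not at hne
      exact h (fun X => X ∈ G) (by simp) (fun X hX => hX) (fun X hX hX' => hne X hX' hX)
    obtain ⟨A, h1, h2⟩ := this
    simpa using Pr.ax (C := C) (by unfold Wt; omega) h1 h2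
  | succ k ih =>
    intro P G D hP hC h
    have w : Wt G D C := by unfold Wt; omega
    have hpos : 1 ≤ 4 ^ k := Nat.one_le_pow _ _ (by norm_num)
    have hC1 : C ≤ 4 ^ k * C := Nat.le_mul_of_pos_left _ hpos
    have b1 : 4 ^ k * C + C ≤ 4 ^ (k+1) * C := by rw [pow_succ]; nlinarith
    have b2 : 4 ^ k * C + 4 ^ k * C + C ≤ 4 ^ (k+1) * C := by rw [pow_succ]; nlinarith
    rcases P.eq_empty_or_nonempty with rfl | hne
    · refine (ih ∅ G D (by simp) (by omega) h).mono (by omega)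
    obtain ⟨F, hF, hmax⟩ := P.exists_max_image szF hne
    have hcard : (P.erase F).card ≤ k := by
      rw [Finset.card_erase_of_mem hF]; omega
    have ext : ∀ v : Fm → Prop, (∀ X ∈ P.erase F, Compat v X) → Compat v F →
        ∀ X ∈ P, Compat v X := by
      intro v h1 h2 X hX
      by_cases hXF : X = F
      · rw [hXF]; exact h2
      · exact h1 X (Finset.mem_erase.2 ⟨hXF, hX⟩)
    have step : ∀ E H : List Fm, E.length + H.length ≤ 2 →
        (∀ v : Fm → Prop, (∀ X ∈ E, v X) → (∀ X ∈ H, ¬ v X) → (∀ X ∈ G, v X) →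
          (∀ X ∈ D, ¬ v X) → Compat v F) →
        Pr (E ++ G) (H ++ D) (4 ^ k * C) := by
      intro E H hl hc
      refine ih (P.erase F) _ _ hcard (by simp; omega) ?_
      intro v hv h1 h2
      have h1a : ∀ X ∈ E, v X := fun X hX => h1 X (by simp [hX])
      have h1b : ∀ X ∈ G, v X := fun X hX => h1 X (by simp [hX])
      have h2a : ∀ X ∈ H, ¬ v X := fun X hX => h2 X (by simp [hX])
      have h2b : ∀ X ∈ D, ¬ v X := fun X hX => h2 X (by simp [hX])
      exact h v (ext v hv (hc v h1a h2a h1b h2b)) h1b h2b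
    by_cases hG : F ∈ G
    · cases F with
      | atom p ts => exact (step [] [] (by simp) (by intros; trivial)).mono (by omega)
      | all A => exact (step [] [] (by simp) (by intros; trivial)).mono (by omega)
      | ex A => exact (step [] [] (by simp) (by intros; trivial)).mono (by omega)
      | and A B =>
        refine (Pr.andL w hG (step [A, B] [] (by simp) ?_)).mono b1
        intro v h1 h2 h3 h4
        have := h3 _ hG
        clear * - h1 h2 this
        simp_all [Compat]
      | or A B =>
        refine (Pr.orL w hG (step [A] [] (by simp) ?_) (step [B] [] (by simp) ?_)).mono b2 <;>
        · intro v h1 h2 h3 h4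
          have := h3 _ hG
          clear * - h1 h2 this
          simp_all [Compat]
      | imp A B =>
        refine (Pr.impL w hG (step [] [A] (by simp) ?_) (step [B] [] (by simp) ?_)).mono b2 <;>
        · intro v h1 h2 h3 h4
          have := h3 _ hG
          clear * - h1 h2 this
          simp_all [Compat]
      | not A =>
        refine (Pr.notL w hG (step [] [A] (by simp) ?_)).mono b1
        intro v h1 h2 h3 h4
        have := h3 _ hG
        clear * - h1 h2 this
        simp_all [Compat]
    by_cases hD : F ∈ D
    · cases F with
      | atom p ts => exact (step [] [] (by simp) (by intros; trivial)).mono (by omega)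
      | all A => exact (step [] [] (by simp) (by intros; trivial)).mono (by omega)
      | ex A => exact (step [] [] (by simp) (by intros; trivial)).mono (by omega)
      | and A B =>
        refine (Pr.andR w hD (step [] [A] (by simp) ?_) (step [] [B] (by simp) ?_)).mono b2 <;>
        · intro v h1 h2 h3 h4
          have := h4 _ hD
          clear * - h1 h2 this
          simp_all [Compat]
      | or A B =>
        refine (Pr.orR w hD (step [] [A, B] (by simp) ?_)).mono b1
        intro v h1 h2 h3 h4
        have := h4 _ hD
        clear * - h1 h2 this
        simp_all [Compat]
      | imp A B =>
        refine (Pr.impR w hD (step [A] [B] (by simp) ?_)).mono b1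
        intro v h1 h2 h3 h4
        have := h4 _ hD
        clear * - h1 h2 this
        simp_all [Compat]
      | not A =>
        refine (Pr.notR w hD (step [A] [] (by simp) ?_)).mono b1
        intro v h1 h2 h3 h4
        have := h4 _ hD
        clear * - h1 h2 this
        simp_all [Compat]
    exact (ih (P.erase F) G D hcard (by omega) (drop_max P G D F hF hmax hG hD h)).mono (by omega)

/-! ## Running a derivation with propositional cuts as a proof search strategy -/

/-- Every valuation that respects `P`, verifies `G` and falsifies `D` satisfies the
renamed sequent `Γ ⊢ Δ`. -/
def Sem (P : Finset Fm) (G D : List Fm) (ρ : ℕ → ℕ) (Γ Δ : List Fm) : Prop :=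
  ∀ v : Fm → Prop, (∀ X ∈ P, Compat v X) → (∀ X ∈ G, v X) → (∀ X ∈ D, ¬ v X) →
    (∀ X ∈ Γ, v (renF ρ X)) → (∀ X ∈ Δ, ¬ v (renF ρ X)) → False

theorem Sem.mono {P P' G G' D D' ρ Γ Δ} (h : Sem P G D ρ Γ Δ) (hP : P ⊆ P') (hG : G ⊆ G')
    (hD : D ⊆ D') : Sem P' G' D' ρ Γ Δ :=
  fun v h1 h2 h3 => h v (fun X hX => h1 X (hP hX)) (fun X hX => h2 X (hG hX))
    (fun X hX => h3 X (hD hX))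

/-- the quantified formulas of `Γ` occur (renamed) in `G` -/
def Cov (ρ : ℕ → ℕ) (Γ G : List Fm) : Prop := ∀ X ∈ Γ, qfree X = false → renF ρ X ∈ G

/-- The continuation `Q` holds of all reachable extensions of the context. -/
def Cont (n : ℕ) (P : Finset Fm) (G D : List Fm) (s : ℕ)
    (S : Finset Fm → List Fm → List Fm → Prop) : Prop :=
  ∀ P' G' D', P ⊆ P' → G ⊆ G' → D ⊆ D' →
    G'.length + D'.length ≤ G.length + D.length + 2 * n → P'.card ≤ P.card + n →
    S P' G' D' → Pr G' D' s

def Run (n : ℕ) (Γ Δ : List Fm) : Prop :=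
  ∀ (ρ : ℕ → ℕ) (P : Finset Fm) (G D : List Fm) (s C : ℕ), Cov ρ Γ G → Cov ρ Δ D →
    10 * (G.length + D.length + 2 * n) + 10 ≤ C →
    Cont n P G D s (fun P' G' D' => Sem P' G' D' ρ Γ Δ) →
    Pr G D (2 ^ n * (s + C))

theorem bound1 (n s C : ℕ) : 2 ^ n * (s + C) + C ≤ 2 ^ (n+1) * (s + C) := by
  have : 1 ≤ 2 ^ n := Nat.one_le_pow _ _ (by norm_num)
  rw [pow_succ]; nlinarith

theorem bound2 (n m s C : ℕ) (hn : 1 ≤ n) (hm : 1 ≤ m) :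
    2 ^ n * (s + C) + 2 ^ m * (s + C) + C ≤ 2 ^ (n+m+1) * (s + C) := by
  have h1 : 2 ^ 1 ≤ 2 ^ n := Nat.pow_le_pow_right (by norm_num) hn
  have h2 : 2 ^ 1 ≤ 2 ^ m := Nat.pow_le_pow_right (by norm_num) hm
  have h3 : 2 ^ n + 2 ^ m + 1 ≤ 2 ^ (n+m+1) := by rw [pow_succ, pow_add]; nlinarith
  calc _ ≤ (2 ^ n + 2 ^ m + 1) * (s + C) := by ring_nf; omega
    _ ≤ _ := Nat.mul_le_mul_right _ h3

theorem bound3 (n m s C : ℕ) :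
    2 ^ n * (2 ^ m * (s + C) + C) ≤ 2 ^ (n+m+1) * (s + C) := by
  calc _ ≤ 2 ^ n * (2 ^ (m+1) * (s + C)) := Nat.mul_le_mul_left _ (bound1 m s C)
    _ = _ := by ring

/-- a rule which leaves the context of the search untouched -/
theorem Run.keep {n Γ Δ} (r : Run n Γ Δ) {ρ P P0 G D s C} {S : Finset Fm → List Fm → List Fm → Prop}
    (h1 : Cov ρ Γ G) (h2 : Cov ρ Δ D)
    (hC : 10 * (G.length + D.length + 2 * (n+1)) + 10 ≤ C)
    (hP : P ⊆ P0) (hcard : P0.card ≤ P.card + 1)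
    (K : Cont (n+1) P G D s S)
    (hS : ∀ P' G' D', P0 ⊆ P' → Sem P' G' D' ρ Γ Δ → S P' G' D') :
    Pr G D (2 ^ (n+1) * (s + C)) := by
  refine (r ρ P0 G D s C h1 h2 (by omega) ?_).mono ((Nat.le_add_right _ C).trans (bound1 n s C))
  intro P' G' D' a b c d e f
  exact K P' G' D' (hP.trans a) b c (by omega) (by omega) (hS _ _ _ a f)

/-- a rule with two premises, run one after the other -/
theorem Run.seq {n m Γ Δ Γ' Δ'} (r : Run n Γ Δ) (r' : Run m Γ' Δ') {ρ P P0 G D s C}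
    {S : Finset Fm → List Fm → List Fm → Prop}
    (h1 : Cov ρ Γ G) (h2 : Cov ρ Δ D) (h3 : Cov ρ Γ' G) (h4 : Cov ρ Δ' D)
    (hC : 10 * (G.length + D.length + 2 * (n+m+1)) + 10 ≤ C)
    (hP : P ⊆ P0) (hcard : P0.card ≤ P.card + 1)
    (K : Cont (n+m+1) P G D s S)
    (hS : ∀ P' G' D', P0 ⊆ P' → Sem P' G' D' ρ Γ Δ → Sem P' G' D' ρ Γ' Δ' → S P' G' D') :
    Pr G D (2 ^ (n+m+1) * (s + C)) := by
  refine (r ρ P0 G D (2 ^ m * (s + C)) C h1 h2 (by omega) ?_).mono (bound3 n m s C)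
  intro P' G' D' a b c d e f
  refine r' ρ P' G' D' s C (fun X hX hq => b (h3 X hX hq)) (fun X hX hq => c (h4 X hX hq))
    (by omega) ?_
  intro P'' G'' D'' a' b' c' d' e' f'
  exact K P'' G'' D'' (hP.trans (a.trans a')) (List.Subset.trans b b') (List.Subset.trans c c')
    (by omega) (by omega) (hS _ _ _ (a.trans a') (f.mono a' b' c') f')

/-- running a premise in an extended context -/
theorem Run.ext {n N Γ Δ} (r : Run n Γ Δ) {ρ P G D s C} {S : Finset Fm → List Fm → List Fm → Prop}
    (E H : List Fm) (hl : E.length + H.length ≤ 2) (hn : n + 1 ≤ N)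
    (h1 : Cov ρ Γ (E ++ G)) (h2 : Cov ρ Δ (H ++ D))
    (hC : 10 * (G.length + D.length + 2 * N) + 10 ≤ C)
    (K : Cont N P G D s S)
    (hS : ∀ P' G' D', E ⊆ G' → H ⊆ D' → G ⊆ G' → D ⊆ D' → Sem P' G' D' ρ Γ Δ → S P' G' D') :
    Pr (E ++ G) (H ++ D) (2 ^ n * (s + C)) := by
  refine r ρ P _ _ s C h1 h2 (by simp; omega) ?_
  intro P' G' D' a b c d e f
  have b1 : E ⊆ G' := fun X hX => b (by simp [hX])
  have b2 : G ⊆ G' := fun X hX => b (by simp [hX])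
  have c1 : H ⊆ D' := fun X hX => c (by simp [hX])
  have c2 : D ⊆ D' := fun X hX => c (by simp [hX])
  simp only [List.length_append] at d
  exact K P' G' D' a b2 c2 (by omega) (by omega) (hS _ _ _ b1 c1 b2 c2 f)

theorem qfree_renF (ρ : ℕ → ℕ) : ∀ A, qfree (renF ρ A) = qfree A
  | .atom p ts => by simp [renF, qfree]
  | .and A B => by simp [renF, qfree, qfree_renF ρ A, qfree_renF ρ B]
  | .or A B => by simp [renF, qfree, qfree_renF ρ A, qfree_renF ρ B]
  | .imp A B => by simp [renF, qfree, qfree_renF ρ A, qfree_renF ρ B]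
  | .not A => by simp [renF, qfree, qfree_renF ρ A]
  | .all A => by simp [renF, qfree]
  | .ex A => by simp [renF, qfree]

theorem Cov.tail {ρ A Γ G} (h : Cov ρ (A :: Γ) G) : Cov ρ Γ G :=
  fun X hX => h X (by simp [hX])
theorem Cov.left {ρ Γ Γ' G} (h : Cov ρ (Γ ++ Γ') G) : Cov ρ Γ G :=
  fun X hX => h X (by simp [hX])
theorem Cov.right {ρ Γ Γ' G} (h : Cov ρ (Γ ++ Γ') G) : Cov ρ Γ' G :=
  fun X hX => h X (by simp [hX])
theorem Cov.cons_qf {ρ A Γ G} (h : Cov ρ Γ G) (hA : qfree A = true) : Cov ρ (A :: Γ) G := by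
  intro X hX hq
  rcases List.mem_cons.1 hX with rfl | hX
  · simp [hA] at hq
  · exact h X hX hq
theorem Cov.cons {ρ A Γ G} (h : Cov ρ Γ G) (hA : renF ρ A ∈ G) : Cov ρ (A :: Γ) G := by
  intro X hX hq
  rcases List.mem_cons.1 hX with rfl | hX
  · exact hA
  · exact h X hX hq
theorem Cov.wk {ρ Γ G} (h : Cov ρ Γ G) (E : List Fm) : Cov ρ Γ (E ++ G) :=
  fun X hX hq => by simp [h X hX hq]

theorem size_pos {Γ Δ} (d : Deriv Γ Δ) : 1 ≤ d.size := by
  cases d <;> simp [Deriv.size]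

theorem len_le {Γ Δ} (d : Deriv Γ Δ) : Γ.length + Δ.length ≤ 2 * d.size := by
  induction d with
  | permL _ _ _ p _ ih => have := p.length_eq; simp [Deriv.size] at *; omega
  | permR _ _ _ p _ ih => have := p.length_eq; simp [Deriv.size] at *; omega
  | _ => simp [Deriv.size] at *; try omega

theorem exists_fresh (l : List ℕ) : ∃ a, a ∉ l := by
  obtain ⟨a, ha⟩ := Infinite.exists_notMem_finset l.toFinset
  exact ⟨a, by simpa using ha⟩

theorem ren_update {ρ : ℕ → ℕ} {a b : ℕ} {X : Fm} (h : a ∉ fvF X) :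
    renF (Function.update ρ a b) X = renF ρ X :=
  renF_congr _ _ _ (fun c hc => Function.update_of_ne (by rintro rfl; exact h hc) _ _)

theorem ren_update_inst {ρ : ℕ → ℕ} {a b : ℕ} {A : Fm} (h : a ∉ fvF A) :
    renF (Function.update ρ a b) (inst0 A (Tm.fvar a)) = inst0 (renF ρ A) (Tm.fvar b) := by
  rw [renF_inst0, ren_update h]; simp [renT]

/-- adding the principal formula to the finite set of tracked formulas -/
theorem exists_insert (P : Finset Fm) (F : Fm) :
    ∃ P0 : Finset Fm, P ⊆ P0 ∧ F ∈ P0 ∧ P0.card ≤ P.card + 1 := by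
  classical
  exact ⟨insert F P, Finset.subset_insert _ _, Finset.mem_insert_self _ _,
    Finset.card_insert_le _ _⟩

theorem Run.andL {n A B Γ Δ} (r : Run n (A :: B :: Γ) Δ) : Run (n+1) (Fm.and A B :: Γ) Δ := by
  intro ρ P G D s C h1 h2 hC K
  by_cases hq : qfree (Fm.and A B) = true
  · obtain ⟨P0, hP, hF, hc⟩ := exists_insert P (renF ρ (Fm.and A B))
    have hq2 : qfree A = true ∧ qfree B = true := by simpa [qfree] using hq
    refine r.keep ((h1.tail.cons_qf hq2.2).cons_qf hq2.1) h2 hC hP hc K ?_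
    intro P' G' D' hsub hsem v v1 v2 v3 v4 v5
    have hcomp := v1 _ (hsub hF)
    have := v4 (Fm.and A B) (by simp)
    simp only [renF, Compat] at hcomp this
    refine hsem v v1 v2 v3 ?_ v5
    simp only [List.forall_mem_cons] at v4 ⊢
    exact ⟨(hcomp.1 this).1, (hcomp.1 this).2, v4.2⟩
  · have hm : Fm.and (renF ρ A) (renF ρ B) ∈ G := h1 (Fm.and A B) (by simp) (by simpa using hq)
    refine (Pr.andL (G := G) (D := D) (C := C) (by unfold Wt; omega) hm
      (r.ext (ρ := ρ) [renF ρ A, renF ρ B] [] (by simp) le_rfl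
        (((h1.tail.wk _).cons (by simp)).cons (by simp)) h2 hC K ?_)).mono (bound1 n s C)
    intro P' G' D' hE hH hG hD hsem v v1 v2 v3 v4 v5
    refine hsem v v1 v2 v3 ?_ v5
    simp only [List.forall_mem_cons] at v4 ⊢
    exact ⟨v2 _ (hE (by simp)), v2 _ (hE (by simp)), v4.2⟩

theorem Run.orR {n A B Γ Δ} (r : Run n Γ (A :: B :: Δ)) : Run (n+1) Γ (Fm.or A B :: Δ) := by
  intro ρ P G D s C h1 h2 hC K
  by_cases hq : qfree (Fm.or A B) = true
  · obtain ⟨P0, hP, hF, hc⟩ := exists_insert P (renF ρ (Fm.or A B))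
    have hq2 : qfree A = true ∧ qfree B = true := by simpa [qfree] using hq
    refine r.keep h1 ((h2.tail.cons_qf hq2.2).cons_qf hq2.1) hC hP hc K ?_
    intro P' G' D' hsub hsem v v1 v2 v3 v4 v5
    have hcomp := v1 _ (hsub hF)
    have := v5 (Fm.or A B) (by simp)
    simp only [renF, Compat] at hcomp this
    refine hsem v v1 v2 v3 v4 ?_
    simp only [List.forall_mem_cons] at v5 ⊢
    exact ⟨fun h => this (hcomp.2 (Or.inl h)), fun h => this (hcomp.2 (Or.inr h)), v5.2⟩
  · have hm : Fm.or (renF ρ A) (renF ρ B) ∈ D := h2 (Fm.or A B) (by simp) (by simpa using hq)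
    refine (Pr.orR (G := G) (D := D) (C := C) (by unfold Wt; omega) hm
      (r.ext (ρ := ρ) [] [renF ρ A, renF ρ B] (by simp) le_rfl
        h1 (((h2.tail.wk _).cons (by simp)).cons (by simp)) hC K ?_)).mono (bound1 n s C)
    intro P' G' D' hE hH hG hD hsem v v1 v2 v3 v4 v5
    refine hsem v v1 v2 v3 v4 ?_
    simp only [List.forall_mem_cons] at v5 ⊢
    exact ⟨v3 _ (hH (by simp)), v3 _ (hH (by simp)), v5.2⟩

theorem Run.impR {n A B Γ Δ} (r : Run n (A :: Γ) (B :: Δ)) : Run (n+1) Γ (Fm.imp A B :: Δ) := by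
  intro ρ P G D s C h1 h2 hC K
  by_cases hq : qfree (Fm.imp A B) = true
  · obtain ⟨P0, hP, hF, hc⟩ := exists_insert P (renF ρ (Fm.imp A B))
    have hq2 : qfree A = true ∧ qfree B = true := by simpa [qfree] using hq
    refine r.keep (h1.cons_qf hq2.1) (h2.tail.cons_qf hq2.2) hC hP hc K ?_
    intro P' G' D' hsub hsem v v1 v2 v3 v4 v5
    have hcomp := v1 _ (hsub hF)
    have := v5 (Fm.imp A B) (by simp)
    simp only [renF, Compat] at hcomp this
    have hAB : v (renF ρ A) ∧ ¬ v (renF ρ B) := by tauto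
    refine hsem v v1 v2 v3 ?_ ?_
    · simp only [List.forall_mem_cons]
      exact ⟨hAB.1, v4⟩
    · simp only [List.forall_mem_cons] at v5 ⊢
      exact ⟨hAB.2, v5.2⟩
  · have hm : Fm.imp (renF ρ A) (renF ρ B) ∈ D := h2 (Fm.imp A B) (by simp) (by simpa using hq)
    refine (Pr.impR (G := G) (D := D) (C := C) (by unfold Wt; omega) hm
      (r.ext (ρ := ρ) [renF ρ A] [renF ρ B] (by simp) le_rfl
        ((h1.wk _).cons (by simp)) ((h2.tail.wk _).cons (by simp)) hC K ?_)).mono (bound1 n s C)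
    intro P' G' D' hE hH hG hD hsem v v1 v2 v3 v4 v5
    refine hsem v v1 v2 v3 ?_ ?_
    · simp only [List.forall_mem_cons]
      exact ⟨v2 _ (hE (by simp)), v4⟩
    · simp only [List.forall_mem_cons] at v5 ⊢
      exact ⟨v3 _ (hH (by simp)), v5.2⟩

theorem Run.notL {n A Γ Δ} (r : Run n Γ (A :: Δ)) : Run (n+1) (Fm.not A :: Γ) Δ := by
  intro ρ P G D s C h1 h2 hC K
  by_cases hq : qfree (Fm.not A) = true
  · obtain ⟨P0, hP, hF, hc⟩ := exists_insert P (renF ρ (Fm.not A))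
    have hq2 : qfree A = true := by simpa [qfree] using hq
    refine r.keep h1.tail (h2.cons_qf hq2) hC hP hc K ?_
    intro P' G' D' hsub hsem v v1 v2 v3 v4 v5
    have hcomp := v1 _ (hsub hF)
    have := v4 (Fm.not A) (by simp)
    simp only [renF, Compat] at hcomp this
    simp only [List.forall_mem_cons] at v4
    refine hsem v v1 v2 v3 v4.2 ?_
    simp only [List.forall_mem_cons]
    exact ⟨hcomp.1 this, v5⟩
  · have hm : Fm.not (renF ρ A) ∈ G := h1 (Fm.not A) (by simp) (by simpa using hq)
    refine (Pr.notL (G := G) (D := D) (C := C) (by unfold Wt; omega) hm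
      (r.ext (ρ := ρ) [] [renF ρ A] (by simp) le_rfl
        h1.tail ((h2.wk _).cons (by simp)) hC K ?_)).mono (bound1 n s C)
    intro P' G' D' hE hH hG hD hsem v v1 v2 v3 v4 v5
    simp only [List.forall_mem_cons] at v4
    refine hsem v v1 v2 v3 v4.2 ?_
    simp only [List.forall_mem_cons]
    exact ⟨v3 _ (hH (by simp)), v5⟩

theorem Run.notR {n A Γ Δ} (r : Run n (A :: Γ) Δ) : Run (n+1) Γ (Fm.not A :: Δ) := by
  intro ρ P G D s C h1 h2 hC K
  by_cases hq : qfree (Fm.not A) = true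
  · obtain ⟨P0, hP, hF, hc⟩ := exists_insert P (renF ρ (Fm.not A))
    have hq2 : qfree A = true := by simpa [qfree] using hq
    refine r.keep (h1.cons_qf hq2) h2.tail hC hP hc K ?_
    intro P' G' D' hsub hsem v v1 v2 v3 v4 v5
    have hcomp := v1 _ (hsub hF)
    have := v5 (Fm.not A) (by simp)
    simp only [renF, Compat] at hcomp this
    have hA : v (renF ρ A) := by tauto
    simp only [List.forall_mem_cons] at v5
    refine hsem v v1 v2 v3 ?_ v5.2
    simp only [List.forall_mem_cons]
    exact ⟨hA, v4⟩
  · have hm : Fm.not (renF ρ A) ∈ D := h2 (Fm.not A) (by simp) (by simpa using hq)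
    refine (Pr.notR (G := G) (D := D) (C := C) (by unfold Wt; omega) hm
      (r.ext (ρ := ρ) [renF ρ A] [] (by simp) le_rfl
        ((h1.wk _).cons (by simp)) h2.tail hC K ?_)).mono (bound1 n s C)
    intro P' G' D' hE hH hG hD hsem v v1 v2 v3 v4 v5
    simp only [List.forall_mem_cons] at v5
    refine hsem v v1 v2 v3 ?_ v5.2
    simp only [List.forall_mem_cons]
    exact ⟨v2 _ (hE (by simp)), v4⟩

theorem Run.andR {n m A B Γ₁ Δ₁ Γ₂ Δ₂} (hn : 1 ≤ n) (hm : 1 ≤ m) (r : Run n Γ₁ (A :: Δ₁))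
    (r' : Run m Γ₂ (B :: Δ₂)) : Run (n+m+1) (Γ₁ ++ Γ₂) (Fm.and A B :: (Δ₁ ++ Δ₂)) := by
  intro ρ P G D s C h1 h2 hC K
  by_cases hq : qfree (Fm.and A B) = true
  · obtain ⟨P0, hP, hF, hc⟩ := exists_insert P (renF ρ (Fm.and A B))
    have hq2 : qfree A = true ∧ qfree B = true := by simpa [qfree] using hq
    refine r.seq r' h1.left (h2.tail.left.cons_qf hq2.1) h1.right (h2.tail.right.cons_qf hq2.2)
      hC hP hc K ?_
    intro P' G' D' hsub hsem hsem' v v1 v2 v3 v4 v5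
    have hcomp := v1 _ (hsub hF)
    have := v5 (Fm.and A B) (by simp)
    simp only [renF, Compat] at hcomp this
    simp only [List.forall_mem_cons, List.forall_mem_append] at v4 v5
    by_cases hA : v (renF ρ A)
    · refine hsem' v v1 v2 v3 v4.2 ?_
      simp only [List.forall_mem_cons]
      exact ⟨by tauto, v5.2.2⟩
    · refine hsem v v1 v2 v3 v4.1 ?_
      simp only [List.forall_mem_cons]
      exact ⟨hA, v5.2.1⟩
  · have hmem : Fm.and (renF ρ A) (renF ρ B) ∈ D :=
      h2 (Fm.and A B) (by simp) (by simpa using hq)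
    refine (Pr.andR (G := G) (D := D) (C := C) (by unfold Wt; omega) hmem
      (r.ext (ρ := ρ) [] [renF ρ A] (by simp) (by omega)
        h1.left ((h2.tail.left.wk _).cons (by simp)) hC K ?_)
      (r'.ext (ρ := ρ) [] [renF ρ B] (by simp) (by omega)
        h1.right ((h2.tail.right.wk _).cons (by simp)) hC K ?_)).mono (bound2 n m s C hn hm)
    · intro P' G' D' hE hH hG hD hsem v v1 v2 v3 v4 v5
      simp only [List.forall_mem_cons, List.forall_mem_append] at v4 v5
      refine hsem v v1 v2 v3 v4.1 ?_
      simp only [List.forall_mem_cons]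
      exact ⟨v3 _ (hH (by simp)), v5.2.1⟩
    · intro P' G' D' hE hH hG hD hsem v v1 v2 v3 v4 v5
      simp only [List.forall_mem_cons, List.forall_mem_append] at v4 v5
      refine hsem v v1 v2 v3 v4.2 ?_
      simp only [List.forall_mem_cons]
      exact ⟨v3 _ (hH (by simp)), v5.2.2⟩

theorem Run.orL {n m A B Γ₁ Δ₁ Γ₂ Δ₂} (hn : 1 ≤ n) (hm : 1 ≤ m) (r : Run n (A :: Γ₁) Δ₁)
    (r' : Run m (B :: Γ₂) Δ₂) : Run (n+m+1) (Fm.or A B :: (Γ₁ ++ Γ₂)) (Δ₁ ++ Δ₂) := by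
  intro ρ P G D s C h1 h2 hC K
  by_cases hq : qfree (Fm.or A B) = true
  · obtain ⟨P0, hP, hF, hc⟩ := exists_insert P (renF ρ (Fm.or A B))
    have hq2 : qfree A = true ∧ qfree B = true := by simpa [qfree] using hq
    refine r.seq r' (h1.tail.left.cons_qf hq2.1) h2.left (h1.tail.right.cons_qf hq2.2) h2.right
      hC hP hc K ?_
    intro P' G' D' hsub hsem hsem' v v1 v2 v3 v4 v5
    have hcomp := v1 _ (hsub hF)
    have := v4 (Fm.or A B) (by simp)
    simp only [renF, Compat] at hcomp this
    simp only [List.forall_mem_cons, List.forall_mem_append] at v4 v5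
    rcases hcomp.1 this with hA | hB
    · refine hsem v v1 v2 v3 ?_ v5.1
      simp only [List.forall_mem_cons]
      exact ⟨hA, v4.2.1⟩
    · refine hsem' v v1 v2 v3 ?_ v5.2
      simp only [List.forall_mem_cons]
      exact ⟨hB, v4.2.2⟩
  · have hmem : Fm.or (renF ρ A) (renF ρ B) ∈ G :=
      h1 (Fm.or A B) (by simp) (by simpa using hq)
    refine (Pr.orL (G := G) (D := D) (C := C) (by unfold Wt; omega) hmem
      (r.ext (ρ := ρ) [renF ρ A] [] (by simp) (by omega)
        ((h1.tail.left.wk _).cons (by simp)) h2.left hC K ?_)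
      (r'.ext (ρ := ρ) [renF ρ B] [] (by simp) (by omega)
        ((h1.tail.right.wk _).cons (by simp)) h2.right hC K ?_)).mono (bound2 n m s C hn hm)
    · intro P' G' D' hE hH hG hD hsem v v1 v2 v3 v4 v5
      simp only [List.forall_mem_cons, List.forall_mem_append] at v4 v5
      refine hsem v v1 v2 v3 ?_ v5.1
      simp only [List.forall_mem_cons]
      exact ⟨v2 _ (hE (by simp)), v4.2.1⟩
    · intro P' G' D' hE hH hG hD hsem v v1 v2 v3 v4 v5
      simp only [List.forall_mem_cons, List.forall_mem_append] at v4 v5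
      refine hsem v v1 v2 v3 ?_ v5.2
      simp only [List.forall_mem_cons]
      exact ⟨v2 _ (hE (by simp)), v4.2.2⟩

theorem Run.impL {n m A B Γ₁ Δ₁ Γ₂ Δ₂} (hn : 1 ≤ n) (hm : 1 ≤ m) (r : Run n Γ₁ (A :: Δ₁))
    (r' : Run m (B :: Γ₂) Δ₂) : Run (n+m+1) (Fm.imp A B :: (Γ₁ ++ Γ₂)) (Δ₁ ++ Δ₂) := by
  intro ρ P G D s C h1 h2 hC K
  by_cases hq : qfree (Fm.imp A B) = true
  · obtain ⟨P0, hP, hF, hc⟩ := exists_insert P (renF ρ (Fm.imp A B))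
    have hq2 : qfree A = true ∧ qfree B = true := by simpa [qfree] using hq
    refine r.seq r' h1.tail.left (h2.left.cons_qf hq2.1) (h1.tail.right.cons_qf hq2.2) h2.right
      hC hP hc K ?_
    intro P' G' D' hsub hsem hsem' v v1 v2 v3 v4 v5
    have hcomp := v1 _ (hsub hF)
    have := v4 (Fm.imp A B) (by simp)
    simp only [renF, Compat] at hcomp this
    simp only [List.forall_mem_cons, List.forall_mem_append] at v4 v5
    by_cases hA : v (renF ρ A)
    · refine hsem' v v1 v2 v3 ?_ v5.2
      simp only [List.forall_mem_cons]
      exact ⟨hcomp.1 this hA, v4.2.2⟩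
    · refine hsem v v1 v2 v3 v4.2.1 ?_
      simp only [List.forall_mem_cons]
      exact ⟨hA, v5.1⟩
  · have hmem : Fm.imp (renF ρ A) (renF ρ B) ∈ G :=
      h1 (Fm.imp A B) (by simp) (by simpa using hq)
    refine (Pr.impL (G := G) (D := D) (C := C) (by unfold Wt; omega) hmem
      (r.ext (ρ := ρ) [] [renF ρ A] (by simp) (by omega)
        h1.tail.left ((h2.left.wk _).cons (by simp)) hC K ?_)
      (r'.ext (ρ := ρ) [renF ρ B] [] (by simp) (by omega)
        ((h1.tail.right.wk _).cons (by simp)) h2.right hC K ?_)).mono (bound2 n m s C hn hm)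
    · intro P' G' D' hE hH hG hD hsem v v1 v2 v3 v4 v5
      simp only [List.forall_mem_cons, List.forall_mem_append] at v4 v5
      refine hsem v v1 v2 v3 v4.2.1 ?_
      simp only [List.forall_mem_cons]
      exact ⟨v3 _ (hH (by simp)), v5.1⟩
    · intro P' G' D' hE hH hG hD hsem v v1 v2 v3 v4 v5
      simp only [List.forall_mem_cons, List.forall_mem_append] at v4 v5
      refine hsem v v1 v2 v3 ?_ v5.2
      simp only [List.forall_mem_cons]
      exact ⟨v2 _ (hE (by simp)), v4.2.2⟩

theorem Run.cut {n m A Γ₁ Δ₁ Γ₂ Δ₂} (hq : qfree A = true) (r : Run n Γ₁ (A :: Δ₁))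
    (r' : Run m (A :: Γ₂) Δ₂) : Run (n+m+1) (Γ₁ ++ Γ₂) (Δ₁ ++ Δ₂) := by
  intro ρ P G D s C h1 h2 hC K
  refine r.seq r' h1.left (h2.left.cons_qf hq) (h1.right.cons_qf hq) h2.right
    hC (Finset.Subset.refl P) (by omega) K ?_
  intro P' G' D' hsub hsem hsem' v v1 v2 v3 v4 v5
  simp only [List.forall_mem_append] at v4 v5
  by_cases hA : v (renF ρ A)
  · refine hsem' v v1 v2 v3 ?_ v5.2
    simp only [List.forall_mem_cons]
    exact ⟨hA, v4.2⟩
  · refine hsem v v1 v2 v3 v4.1 ?_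
    simp only [List.forall_mem_cons]
    exact ⟨hA, v5.1⟩

/-- structural rules: the premise contains no new formulas -/
theorem Run.struct {n Γ Δ Γ' Δ'} (hΓ : Γ ⊆ Γ') (hΔ : Δ ⊆ Δ') (r : Run n Γ Δ) :
    Run (n+1) Γ' Δ' := by
  intro ρ P G D s C h1 h2 hC K
  refine r.keep (fun X hX => h1 X (hΓ hX)) (fun X hX => h2 X (hΔ hX)) hC
    (Finset.Subset.refl P) (by omega) K ?_
  intro P' G' D' hsub hsem v v1 v2 v3 v4 v5
  exact hsem v v1 v2 v3 (fun X hX => v4 X (hΓ hX)) (fun X hX => v5 X (hΔ hX))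

theorem Run.allL {n u A Γ Δ} (r : Run n (inst0 A u :: Γ) Δ) : Run (n+1) (Fm.all A :: Γ) Δ := by
  intro ρ P G D s C h1 h2 hC K
  have hm : Fm.all (renF ρ A) ∈ G := h1 (Fm.all A) (by simp) (by simp [qfree])
  refine (Pr.allL (G := G) (D := D) (C := C) (u := renT ρ u) (by unfold Wt; omega) hm
    (r.ext (ρ := ρ) [inst0 (renF ρ A) (renT ρ u)] [] (by simp) le_rfl
      ((h1.tail.wk _).cons (by simp [renF_inst0])) h2 hC K ?_)).mono (bound1 n s C)
  intro P' G' D' hE hH hG hD hsem v v1 v2 v3 v4 v5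
  refine hsem v v1 v2 v3 ?_ v5
  simp only [List.forall_mem_cons, renF_inst0] at v4 ⊢
  exact ⟨v2 _ (hE (by simp)), v4.2⟩

theorem Run.exR {n u A Γ Δ} (r : Run n Γ (inst0 A u :: Δ)) : Run (n+1) Γ (Fm.ex A :: Δ) := by
  intro ρ P G D s C h1 h2 hC K
  have hm : Fm.ex (renF ρ A) ∈ D := h2 (Fm.ex A) (by simp) (by simp [qfree])
  refine (Pr.exR (G := G) (D := D) (C := C) (u := renT ρ u) (by unfold Wt; omega) hm
    (r.ext (ρ := ρ) [] [inst0 (renF ρ A) (renT ρ u)] (by simp) le_rfl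
      h1 ((h2.tail.wk _).cons (by simp [renF_inst0])) hC K ?_)).mono (bound1 n s C)
  intro P' G' D' hE hH hG hD hsem v v1 v2 v3 v4 v5
  refine hsem v v1 v2 v3 v4 ?_
  simp only [List.forall_mem_cons, renF_inst0] at v5 ⊢
  exact ⟨v3 _ (hH (by simp)), v5.2⟩

theorem Cov.upd {ρ : ℕ → ℕ} {a b : ℕ} {Γ G} (h : Cov ρ Γ G) (ha : ∀ X ∈ Γ, a ∉ fvF X) :
    Cov (Function.update ρ a b) Γ G := by
  intro X hX hq
  rw [ren_update (ha X hX)]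
  exact h X hX hq

theorem Run.allR {n a A Γ Δ} (ha : a ∉ fvSeq Γ (Fm.all A :: Δ))
    (r : Run n Γ (inst0 A (Tm.fvar a) :: Δ)) : Run (n+1) Γ (Fm.all A :: Δ) := by
  intro ρ P G D s C h1 h2 hC K
  have hm : Fm.all (renF ρ A) ∈ D := h2 (Fm.all A) (by simp) (by simp [qfree])
  obtain ⟨b, hb⟩ := exists_fresh (fvSeq G D)
  rw [notMem_fvSeq, List.forall_mem_cons] at ha
  obtain ⟨ha1, ha2, ha3⟩ := ha
  have haA : a ∉ fvF A := by simpa [fvF] using ha2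
  refine (Pr.allR (G := G) (D := D) (C := C) (by unfold Wt; omega) hm hb
    (r.ext (ρ := Function.update ρ a b) [] [inst0 (renF ρ A) (Tm.fvar b)] (by simp) le_rfl
      (h1.upd ha1) (((h2.tail.upd ha3).wk _).cons (by simp [ren_update_inst haA])) hC K
      ?_)).mono (bound1 n s C)
  intro P' G' D' hE hH hG hD hsem v v1 v2 v3 v4 v5
  simp only [List.forall_mem_cons] at v5
  refine hsem v v1 v2 v3 (fun X hX => ?_) ?_
  · rw [ren_update (ha1 X hX)]; exact v4 X hX
  · simp only [List.forall_mem_cons, ren_update_inst haA]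
    refine ⟨v3 _ (hH (by simp)), fun X hX => ?_⟩
    rw [ren_update (ha3 X hX)]; exact v5.2 X hX

theorem Run.exL {n a A Γ Δ} (ha : a ∉ fvSeq (Fm.ex A :: Γ) Δ)
    (r : Run n (inst0 A (Tm.fvar a) :: Γ) Δ) : Run (n+1) (Fm.ex A :: Γ) Δ := by
  intro ρ P G D s C h1 h2 hC K
  have hm : Fm.ex (renF ρ A) ∈ G := h1 (Fm.ex A) (by simp) (by simp [qfree])
  obtain ⟨b, hb⟩ := exists_fresh (fvSeq G D)
  rw [notMem_fvSeq, List.forall_mem_cons] at ha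
  obtain ⟨⟨ha2, ha1⟩, ha3⟩ := ha
  have haA : a ∉ fvF A := by simpa [fvF] using ha2
  refine (Pr.exL (G := G) (D := D) (C := C) (by unfold Wt; omega) hm hb
    (r.ext (ρ := Function.update ρ a b) [inst0 (renF ρ A) (Tm.fvar b)] [] (by simp) le_rfl
      (((h1.tail.upd ha1).wk _).cons (by simp [ren_update_inst haA])) (h2.upd ha3) hC K
      ?_)).mono (bound1 n s C)
  intro P' G' D' hE hH hG hD hsem v v1 v2 v3 v4 v5
  simp only [List.forall_mem_cons] at v4
  refine hsem v v1 v2 v3 ?_ (fun X hX => ?_)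
  · simp only [List.forall_mem_cons, ren_update_inst haA]
    refine ⟨v2 _ (hE (by simp)), fun X hX => ?_⟩
    rw [ren_update (ha1 X hX)]; exact v4.2 X hX
  · rw [ren_update (ha3 X hX)]; exact v5 X hX

theorem Run.ax (A : Fm) : Run 1 [A] [A] := by
  intro ρ P G D s C h1 h2 hC K
  refine (K P G D (Finset.Subset.refl P) (List.Subset.refl G) (List.Subset.refl D)
    (by omega) (by omega) ?_).mono (by omega)
  intro v v1 v2 v3 v4 v5
  exact v5 A (by simp) (v4 A (by simp))

theorem run_all {Γ Δ} (d : Deriv Γ Δ) (hs : d.Std) (hq : ∀ A ∈ d.cutFms, qfree A = true) :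
    Run d.size Γ Δ := by
  induction d with
  | ax A => exact Run.ax A
  | andL A B Γ Δ d ih => exact (ih hs hq).andL
  | orR A B Γ Δ d ih => exact (ih hs hq).orR
  | impR A B Γ Δ d ih => exact (ih hs hq).impR
  | notL A Γ Δ d ih => exact (ih hs hq).notL
  | notR A Γ Δ d ih => exact (ih hs hq).notR
  | andR A B _ _ _ _ d e ih ih' =>
    simp only [Deriv.cutFms, List.forall_mem_append] at hq
    exact Run.andR (size_pos d) (size_pos e) (ih hs.1 hq.1) (ih' hs.2 hq.2)
  | orL A B _ _ _ _ d e ih ih' =>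
    simp only [Deriv.cutFms, List.forall_mem_append] at hq
    exact Run.orL (size_pos d) (size_pos e) (ih hs.1 hq.1) (ih' hs.2 hq.2)
  | impL A B _ _ _ _ d e ih ih' =>
    simp only [Deriv.cutFms, List.forall_mem_append] at hq
    exact Run.impL (size_pos d) (size_pos e) (ih hs.1 hq.1) (ih' hs.2 hq.2)
  | cut A _ _ _ _ d e ih ih' =>
    simp only [Deriv.cutFms, List.forall_mem_cons, List.forall_mem_append] at hq
    exact Run.cut hq.1 (ih hs.1 hq.2.1) (ih' hs.2 hq.2.2)
  | wL A Γ Δ d ih => exact Run.struct (by simp) (by simp) (ih hs hq)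
  | wR A Γ Δ d ih => exact Run.struct (by simp) (by simp) (ih hs hq)
  | cL A Γ Δ d ih => exact Run.struct (by simp) (by simp) (ih hs hq)
  | cR A Γ Δ d ih => exact Run.struct (by simp) (by simp) (ih hs hq)
  | allL t A Γ Δ d ih => exact (ih hs hq).allL
  | exR t A Γ Δ d ih => exact (ih hs hq).exR
  | allR a A Γ Δ d ih => exact Run.allR hs.1 (ih hs.2 hq)
  | exL a A Γ Δ d ih => exact Run.exL hs.1 (ih hs.2 hq)
  | permL Γ Γ' Δ p d ih => exact Run.struct p.subset (by simp) (ih hs hq)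
  | permR Γ Δ Δ' p d ih => exact Run.struct (by simp) p.subset (ih hs hq)

theorem final_bound (n : ℕ) :
    2 ^ n * (4 ^ n * (60 * n + 10) + (60 * n + 10)) ≤ 2 ^ 2 ^ (10 * n + 10) := by
  have hn : n < 2 ^ n := Nat.lt_two_pow_self
  have h1 : 60 * n + 10 ≤ 2 ^ (n + 6) := by rw [pow_add]; omega
  have h2 : (4 : ℕ) ^ n = 2 ^ (2 * n) := by rw [pow_mul]; norm_num
  have h3 : 1 ≤ 2 ^ (2 * n) := Nat.one_le_pow _ _ (by norm_num)
  calc 2 ^ n * (4 ^ n * (60 * n + 10) + (60 * n + 10))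
      ≤ 2 ^ n * (2 ^ (2 * n) * 2 ^ (n + 6) + 2 ^ (2 * n) * 2 ^ (n + 6)) := by
        rw [h2]
        refine Nat.mul_le_mul_left _ (Nat.add_le_add (Nat.mul_le_mul_left _ h1) ?_)
        exact h1.trans (Nat.le_mul_of_pos_left _ h3)
    _ = 2 ^ (4 * n + 7) := by ring
    _ ≤ 2 ^ 2 ^ (10 * n + 10) := by
        refine Nat.pow_le_pow_right (by norm_num) ?_
        have : 10 * n + 10 < 2 ^ (10 * n + 10) := Nat.lt_two_pow_self
        omega

/-- cf. Weller. Every LK-proof with only propositional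
(quantifier-free) cuts of a sequent `Γ ⊢ Δ` can be transformed into a cut-free
LK-proof of `Γ ⊢ Δ` whose size is at most double exponential in the size of
the original proof. -/
theorem propositional_cut_elimination :
    ∃ c : ℕ, ∀ (Γ Δ : List Fm) (d : Deriv Γ Δ), d.Std →
      (∀ A ∈ d.cutFms, qfree A = true) →
      ∃ d' : Deriv Γ Δ,
        d'.Std ∧ d'.cutFms = [] ∧ d'.size ≤ 2 ^ 2 ^ (c * d.size + c) := by
  refine ⟨10, fun Γ Δ d hs hq => ?_⟩
  have hlen := len_le d
  have key : Pr Γ Δ (2 ^ d.size * (4 ^ d.size * (60 * d.size + 10) + (60 * d.size + 10))) := by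
    refine run_all d hs hq id ∅ Γ Δ _ _ (fun X hX _ => by rwa [renF_id])
      (fun X hX _ => by rwa [renF_id]) (by omega) ?_
    intro P' G' D' _ hG hD hl hc hsem
    refine closing _ d.size P' G' D' (by simpa using hc) (by omega) ?_
    intro v v1 v2 v3
    refine hsem v v1 v2 v3 (fun X hX => ?_) (fun X hX => ?_)
    · rw [renF_id]; exact v2 X (hG hX)
    · rw [renF_id]; exact v3 X (hD hX)
  exact key.mono (final_bound d.size)

end EpsCalc
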